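/- arXiv:math/0212267 — 5 statements merged into one kernel-verified Lean document; each statement's English description precedes it below -/
import Mathlib

section
/- For every odd integer n ≥ 3, the number of involutions of {1,2,…,n} with exactly 3 fixed points that contain the pattern 123 exactly once equals (3/n)·C(n, (n-3)/2), i.e. n·i_n^3(∅;123) = 3·C(n, (n-3)/2); moreover this number equals C_{(n+1)/2} − C_{(n-1)/2}, where C_m denotes the m-th Catalan number. -/
/-- The number of fixed points of a permutation of `Fin n`. -/
def fixedPts {n : ℕ} (π : Equiv.Perm (Fin n)) : ℕ :=
  (Finset.univ.filter fun i => π i = i).card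

/-- A permutation is an involution if it is its own inverse. -/
def IsInvolution {n : ℕ} (π : Equiv.Perm (Fin n)) : Prop :=
  ∀ i, π (π i) = i

/-- The number of occurrences of the pattern 123 in a permutation of `Fin n`. -/
noncomputable def occ123 {n : ℕ} (π : Equiv.Perm (Fin n)) : ℕ :=
  Nat.card {t : Fin n × Fin n × Fin n //
    t.1 < t.2.1 ∧ t.2.1 < t.2.2 ∧ (π t.1 < π t.2.1 ∧ π t.2.1 < π t.2.2)}

/-- `i_n^k(∅;123)`: the number of involutions of `{1, …, n}` with exactly `k` fixed
points containing the pattern 123 exactly once. -/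
noncomputable def iCountOnce123 (n k : ℕ) : ℕ :=
  Nat.card {π : Equiv.Perm (Fin n) // IsInvolution π ∧ occ123 π = 1 ∧ fixedPts π = k}


def Av {n : ℕ} (π : Equiv.Perm (Fin n)) : Prop :=
  ∀ i j k, i < j → j < k → π i < π j → ¬ π j < π k

def DA {n : ℕ} (t : ℕ) (π : Equiv.Perm (Fin n)) : Prop :=
  ∀ i j, i < j → t ≤ (π i : ℕ) → ¬ π i < π j

noncomputable def B (n t : ℕ) : ℕ := Nat.card {π : Equiv.Perm (Fin n) // Av π ∧ DA t π}

def consP {n : ℕ} (x : Fin (n+1)) (σ : Equiv.Perm (Fin n)) : Equiv.Perm (Fin (n+1)) :=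
  ((finSuccEquiv' 0).trans (Equiv.optionCongr σ)).trans (finSuccEquiv' x).symm

theorem consP_zero {n : ℕ} (x : Fin (n+1)) (σ : Equiv.Perm (Fin n)) : consP x σ 0 = x := by
  simp [consP]

theorem consP_succ {n : ℕ} (x : Fin (n+1)) (σ : Equiv.Perm (Fin n)) (i : Fin n) :
    consP x σ i.succ = x.succAbove (σ i) := by
  have : (finSuccEquiv' (0 : Fin (n+1))) i.succ = some i := by
    rw [← Fin.succAbove_zero_apply, finSuccEquiv'_succAbove]
  simp [consP, this]

theorem consP_bij (n : ℕ) : Function.Bijective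
    (fun p : Fin (n+1) × Equiv.Perm (Fin n) => consP p.1 p.2) := by
  rw [Fintype.bijective_iff_injective_and_card]
  constructor
  · rintro ⟨x, σ⟩ ⟨y, ρ⟩ h
    have h' : consP x σ = consP y ρ := h
    have h0 : x = y := by
      have := congrArg (fun f => f 0) h'
      simpa [consP_zero] using this
    subst h0
    congr 1
    ext i
    have := congrArg (fun f => f i.succ) h'
    simp only [consP_succ] at this
    rw [Fin.succAbove_right_injective this]
  · simp [Fintype.card_perm, Nat.factorial_succ]

theorem sA_val {n : ℕ} (x : Fin (n+1)) (i : Fin n) :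
    ((x.succAbove i : Fin (n+1)) : ℕ) = if (i : ℕ) < x then (i : ℕ) else i + 1 := by
  rw [Fin.succAbove]
  simp only [Fin.lt_def, Fin.val_castSucc]
  split_ifs <;> simp

theorem Av_cons {n : ℕ} (x : Fin (n+1)) (σ : Equiv.Perm (Fin n)) :
    Av (consP x σ) ↔ Av σ ∧ DA x σ := by
  constructor
  · intro h
    constructor
    · intro i j k hij hjk h1 h2
      apply h i.succ j.succ k.succ (by simpa) (by simpa)
      · simpa [consP_succ] using h1
      · simpa [consP_succ] using h2
    · intro i j hij h1 h2
      apply h 0 i.succ j.succ (by simp) (by simpa)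
      · rw [consP_zero, consP_succ, Fin.lt_def, sA_val]; split_ifs <;> omega
      · simpa [consP_succ] using h2
  · rintro ⟨h, hd⟩ i j k hij hjk h1 h2
    have hj : j ≠ 0 := by rintro rfl; simp at hij
    have hk : k ≠ 0 := by rintro rfl; simp at hjk
    obtain ⟨j, rfl⟩ := Fin.exists_succ_eq.2 hj
    obtain ⟨k, rfl⟩ := Fin.exists_succ_eq.2 hk
    simp only [consP_succ, Fin.succAbove_lt_succAbove_iff] at h2
    by_cases hi : i = 0
    · subst hi
      apply hd j k (by simpa using hjk) _ h2
      rw [consP_zero, consP_succ, Fin.lt_def, sA_val] at h1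
      split_ifs at h1 <;> omega
    · obtain ⟨i, rfl⟩ := Fin.exists_succ_eq.2 hi
      exact h i j k (by simpa using hij) (by simpa using hjk) (by simpa [consP_succ] using h1) h2

theorem DA_cons {n t : ℕ} (x : Fin (n+1)) (σ : Equiv.Perm (Fin n)) :
    (DA x σ ∧ DA t (consP x σ)) ↔ ((x : ℕ) < t ∧ DA x σ) ∨ ((x : ℕ) = n ∧ DA t σ) := by
  constructor
  · rintro ⟨h1, h2⟩
    by_cases hx : (x : ℕ) < t
    · exact Or.inl ⟨hx, h1⟩
    right
    have hxn : (x : ℕ) = n := by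
      by_contra hne
      have hx2 := x.2
      have hxn : (x : ℕ) < n := by omega
      obtain ⟨i, hi⟩ := σ.surjective ⟨x, hxn⟩
      apply h2 0 i.succ (by simp)
      · rw [consP_zero]; omega
      · rw [consP_zero, consP_succ, Fin.lt_def, sA_val, hi]; simp
    refine ⟨hxn, ?_⟩
    intro i j hij ha hb
    apply h2 i.succ j.succ (by simpa)
    · rw [consP_succ, sA_val]; split_ifs <;> omega
    · simpa [consP_succ] using hb
  · intro h
    have key : ∀ (i j : Fin n), i < j → t ≤ (consP x σ i.succ : ℕ) → ¬ σ i < σ j := by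
      intro i j hij ha
      rw [consP_succ, sA_val] at ha
      rcases h with ⟨hx, h1⟩ | ⟨hx, h1⟩
      · apply h1 i j hij
        split_ifs at ha <;> omega
      · apply h1 i j hij
        have := (σ i).2
        split_ifs at ha <;> omega
    refine ⟨?_, ?_⟩
    · rcases h with h | h
      · exact h.2
      · intro i j hij ha; have := (σ i).2; omega
    · intro i j hij ha hb
      have hj : j ≠ 0 := by rintro rfl; simp at hij
      obtain ⟨j, rfl⟩ := Fin.exists_succ_eq.2 hj
      by_cases hi : i = 0
      · subst hi
        rw [consP_zero] at ha hb
        have := (consP x σ j.succ).2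
        rw [Fin.lt_def] at hb
        omega
      · obtain ⟨i, rfl⟩ := Fin.exists_succ_eq.2 hi
        exact key i j (by simpa using hij) ha (by simpa [consP_succ] using hb)

theorem B_top (n : ℕ) : B n n = Nat.card {π : Equiv.Perm (Fin n) // Av π} := by
  apply Nat.card_congr
  apply Equiv.subtypeEquivRight
  intro π
  constructor
  · exact fun h => h.1
  · intro h; refine ⟨h, ?_⟩
    intro i j _ h; have := (π i).2; omega

open Classical in
theorem card_cons (n : ℕ) (P : Equiv.Perm (Fin (n+1)) → Prop) :
    Nat.card {π // P π} = ∑ x : Fin (n+1), Nat.card {σ : Equiv.Perm (Fin n) // P (consP x σ)} := by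
  rw [← Nat.card_sigma]
  symm
  apply Nat.card_congr
  refine Equiv.trans ?_ ((Equiv.ofBijective _ (consP_bij n)).subtypeEquiv
    (p := fun p => P (consP p.1 p.2)) (q := P) (by intro a; rfl))
  exact { toFun := fun p => ⟨(p.1, p.2.1), p.2.2⟩
          invFun := fun p => ⟨p.1.1, p.1.2, p.2⟩
          left_inv := fun _ => rfl
          right_inv := fun _ => rfl }

theorem B_succ {n t : ℕ} (ht : t ≤ n) : B (n+1) t = ∑ x ∈ Finset.range (t+1), B n x := by
  classical
  unfold B
  rw [card_cons]
  have h1 : ∀ x : Fin (n+1), Nat.card {σ : Equiv.Perm (Fin n) // Av (consP x σ) ∧ DA t (consP x σ)}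
      = (if (x:ℕ) < t then B n x else 0) + (if (x:ℕ) = n then B n t else 0) := by
    intro x
    have h2 : ∀ σ : Equiv.Perm (Fin n), (Av (consP x σ) ∧ DA t (consP x σ)) ↔
      (Av σ ∧ (((x : ℕ) < t ∧ DA x σ) ∨ ((x : ℕ) = n ∧ DA t σ))) := by
      intro σ; rw [Av_cons, and_assoc, DA_cons]
    rw [Nat.card_congr (Equiv.subtypeEquivRight h2)]
    by_cases ha : (x:ℕ) < t
    · have hb : (x:ℕ) ≠ n := by omega
      simp [ha, hb, B]
    · by_cases hb : (x:ℕ) = n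
      · have hc : ¬ n < t := by omega
        simp [hb, B, hc]
      · simp [ha, hb]
  rw [Finset.sum_congr rfl (fun x _ => h1 x), Finset.sum_add_distrib, Finset.sum_range_succ]
  rw [Fin.sum_univ_eq_sum_range (fun x => if x < t then B n x else 0),
    Fin.sum_univ_eq_sum_range (fun x => if x = n then B n t else 0)]
  congr 1
  · rw [← Finset.sum_filter]
    apply Finset.sum_congr _ (fun _ _ => rfl)
    ext y; simp; omega
  · simp [B]

theorem B_succ_top (n : ℕ) : B (n+1) (n+1) = B (n+1) n := by
  unfold B
  apply Nat.card_congr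
  apply Equiv.subtypeEquivRight
  intro π
  refine and_congr_right fun _ => ⟨?_, ?_⟩
  · intro h i j hij ha hb
    have := (π j).2; rw [Fin.lt_def] at hb; omega
  · intro h i j hij ha hb
    have := (π j).2; rw [Fin.lt_def] at hb; omega

theorem B_zero_zero : B 0 0 = 1 := by
  rw [B_top, Nat.card_eq_one_iff_unique]
  refine ⟨⟨fun a b => Subtype.ext (Subsingleton.elim _ _)⟩, ⟨⟨1, fun i => i.elim0⟩⟩⟩

theorem B_formula (n : ℕ) : ∀ t ≤ n, B n t + (n+t).choose (n+1) = (n+t).choose n := by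
  induction n with
  | zero => intro t ht; obtain rfl : t = 0 := by omega
            simp [B_zero_zero]
  | succ n ih =>
    have main : ∀ t ≤ n, B (n+1) t + (n+1+t).choose (n+2) = (n+1+t).choose (n+1) := by
      intro t
      induction t with
      | zero =>
        intro _
        have := ih 0 (by omega)
        rw [B_succ (by omega)]
        simp at this ⊢
        omega
      | succ t iht =>
        intro ht
        have h1 := iht (by omega)
        have h2 := ih (t+1) ht
        rw [B_succ ht, Finset.sum_range_succ, ← B_succ (by omega)]
        have e1 : n+1+(t+1) = (n+1+t)+1 := by ring
        have e2 : n+(t+1) = (n+1+t) := by ring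
        rw [e1, Nat.choose_succ_succ' (n+1+t) (n+1), Nat.choose_succ_succ' (n+1+t) n]
        rw [e2] at h2
        have e5 : n+1+1 = n+2 := rfl
        rw [e5]
        omega
    intro t ht
    rcases Nat.lt_or_ge n t with h | h
    · obtain rfl : t = n+1 := by omega
      rw [B_succ_top]
      have h1 := main n le_rfl
      have e1 : n+1+(n+1) = (n+1+n)+1 := by ring
      have e5 : n+1+1 = n+2 := rfl
      rw [e1, Nat.choose_succ_succ' (n+1+n) (n+1), Nat.choose_succ_succ' (n+1+n) n, e5]
      have h3 : (n+1+n).choose n = (n+1+n).choose (n+1) := Nat.choose_symm_of_eq_add (by ring)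
      omega
    · exact main t h

theorem card_Av (n : ℕ) : Nat.card {π : Equiv.Perm (Fin n) // Av π} = catalan n := by
  rw [← B_top]
  have h := B_formula n n le_rfl
  have h2 := succ_mul_catalan_eq_centralBinom n
  rw [Nat.centralBinom_eq_two_mul_choose, two_mul] at h2
  have h3 := Nat.choose_succ_right_eq (n+n) n
  rw [Nat.add_sub_cancel] at h3
  have : (n+1) * B n n = (n+1) * catalan n := by
    rw [h2]; nlinarith
  exact Nat.eq_of_mul_eq_mul_left (by omega) this

theorem card_Av_last (n : ℕ) :
    Nat.card {π : Equiv.Perm (Fin (n+1)) // Av π ∧ π 0 ≠ Fin.last n} + catalan n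
      = catalan (n+1) := by
  classical
  have h0 : Nat.card {π : Equiv.Perm (Fin (n+1)) // Av π ∧ π 0 = Fin.last n} = catalan n := by
    rw [card_cons, Finset.sum_eq_single (Fin.last n)]
    · rw [← card_Av]
      apply Nat.card_congr
      apply Equiv.subtypeEquivRight
      intro σ
      rw [Av_cons, consP_zero]
      simp only [and_true]
      refine ⟨fun h => h.1, fun h => ⟨h, ?_⟩⟩
      intro i j _ h; have := (σ i).2; simp at h; omega
    · intro x _ hx
      simp [consP_zero, hx]
    · simp
  rw [← h0, ← card_Av (n+1)]
  simp only [Nat.card_eq_fintype_card, Fintype.card_subtype]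
  rw [← Finset.filter_filter, ← Finset.filter_filter, add_comm]
  exact Finset.card_filter_add_card_filter_not _

def fF {m : ℕ} (τ : Equiv.Perm (Fin (m+1))) (p : Fin (2*m+1)) : Fin (2*m+1) :=
  if h : (p : ℕ) < m then
    (if (τ.symm ⟨p, by omega⟩ : ℕ) = 0 then p
      else ⟨m + τ.symm ⟨p, by omega⟩, by omega⟩)
  else if (p : ℕ) = m ∨ (τ ⟨p - m, by omega⟩ : ℕ) = m then p
  else ⟨τ ⟨p - m, by omega⟩, by omega⟩

theorem fF_spec {m : ℕ} (τ : Equiv.Perm (Fin (m+1))) (p : Fin (2*m+1)) :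
    ((p : ℕ) = m ∧ (fF τ p : ℕ) = m) ∨
    ∃ e : Fin (m+1), 
      ((e : ℕ) = 0 ∧ (p : ℕ) < m ∧ (fF τ p : ℕ) = p ∧ (τ e : ℕ) = p) ∨
      (0 < (e : ℕ) ∧ (p : ℕ) < m ∧ (fF τ p : ℕ) = m + e ∧ (τ e : ℕ) = p) ∨
      (0 < (e : ℕ) ∧ (p : ℕ) = m + e ∧ (fF τ p : ℕ) = p ∧ (τ e : ℕ) = m) ∨
      (0 < (e : ℕ) ∧ (p : ℕ) = m + e ∧ (fF τ p : ℕ) = τ e ∧ (τ e : ℕ) < m) := by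
  by_cases h : (p : ℕ) < m
  · right
    refine ⟨τ.symm ⟨p, by omega⟩, ?_⟩
    by_cases h2 : (τ.symm ⟨p, by omega⟩ : ℕ) = 0
    · left; simp only [fF, h, h2]; simp
    · right; left
      refine ⟨by omega, h, ?_, ?_⟩
      · simp [fF, h, h2]
      · simp
  · by_cases h1 : (p : ℕ) = m
    · left; simp [fF, h1]
    right
    refine ⟨⟨p - m, by omega⟩, ?_⟩
    have := (τ ⟨p - m, by omega⟩).2
    by_cases h2 : (τ ⟨p - m, by omega⟩ : ℕ) = m
    · right; right; left; simp [fF, h, h2]; omega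
    · right; right; right; simp [fF, h, h1, h2]; omega

theorem fF_invol {m : ℕ} (τ : Equiv.Perm (Fin (m+1))) : Function.Involutive (fF τ) := by
  intro p
  apply Fin.ext
  have inj : ∀ x y : Fin (m+1), (τ x : ℕ) = τ y → (x : ℕ) = y := fun x y h => by
    rw [τ.injective (Fin.ext h)]
  have inj2 : ∀ x y : Fin (m+1), (x : ℕ) = y → (τ x : ℕ) = τ y := fun x y h => by
    rw [Fin.ext h]
  have h1 := fF_spec τ p
  have h2 := fF_spec τ (fF τ p)
  rcases h1 with h1 | ⟨e, h1⟩ <;> rcases h2 with h2 | ⟨e', h2⟩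
  · omega
  · omega
  · omega
  · have a1 := inj e e'
    have a2 := inj2 e e'
    omega

def permF {m : ℕ} (τ : Equiv.Perm (Fin (m+1))) : Equiv.Perm (Fin (2*m+1)) :=
  (fF_invol τ).toPerm

theorem permF_apply {m : ℕ} (τ : Equiv.Perm (Fin (m+1))) (p) : permF τ p = fF τ p := rfl

def Good {N : ℕ} (π : Equiv.Perm (Fin N)) : Prop :=
  IsInvolution π ∧ ∃ a b c : Fin N, a < b ∧ b < c ∧ π a = a ∧ π b = b ∧ π c = c ∧
    (∀ p, π p = p → p = a ∨ p = b ∨ p = c) ∧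
    (∀ i j k, i < j → j < k → π i < π j → π j < π k → i = a ∧ j = b ∧ k = c)

theorem good_iff {N : ℕ} (π : Equiv.Perm (Fin N)) :
    (IsInvolution π ∧ occ123 π = 1 ∧ fixedPts π = 3) ↔ Good π := by
  refine and_congr_right fun _ => ?_
  constructor
  · rintro ⟨ho, hf⟩
    have hr := Finset.range_orderEmbOfFin _ hf
    have hm : ∀ i, π ((Finset.univ.filter fun i => π i = i).orderEmbOfFin hf i) = 
        (Finset.univ.filter fun i => π i = i).orderEmbOfFin hf i := by
      intro i
      have := Finset.orderEmbOfFin_mem _ hf i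
      simpa using this
    set e := (Finset.univ.filter fun i => π i = i).orderEmbOfFin hf with he
    have hab : e 0 < e 1 := by simp
    have hbc : e 1 < e 2 := by simp
    refine ⟨e 0, e 1, e 2, hab, hbc, hm 0, hm 1, hm 2, ?_, ?_⟩
    · intro p hp
      have : p ∈ Set.range e := by rw [hr]; simpa using hp
      obtain ⟨i, rfl⟩ := this
      fin_cases i <;> simp
    · intro i j k hij hjk h1 h2
      have := (Nat.card_eq_one_iff_unique.1 ho).1
      have := Subsingleton.elim 
        (⟨(i, j, k), hij, hjk, h1, h2⟩ : {t : Fin N × Fin N × Fin N //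
          t.1 < t.2.1 ∧ t.2.1 < t.2.2 ∧ (π t.1 < π t.2.1 ∧ π t.2.1 < π t.2.2)})
        ⟨(e 0, e 1, e 2), hab, hbc, by simp only [hm]; exact hab, by simp only [hm]; exact hbc⟩
      simpa using this
  · rintro ⟨a, b, c, hab, hbc, ha, hb, hc, hfix, hocc⟩
    constructor
    · apply Nat.card_eq_one_iff_unique.2
      refine ⟨⟨?_⟩, ⟨⟨(a, b, c), hab, hbc, ?_, ?_⟩⟩⟩
      · rintro ⟨⟨i, j, k⟩, h1, h2, h3, h4⟩ ⟨⟨i', j', k'⟩, h1', h2', h3', h4'⟩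
        obtain ⟨rfl, rfl, rfl⟩ := hocc _ _ _ h1 h2 h3 h4
        obtain ⟨rfl, rfl, rfl⟩ := hocc _ _ _ h1' h2' h3' h4'
        rfl
      · simp only [ha, hb]; exact hab
      · simp only [hc, hb]; exact hbc
    · have : (Finset.univ.filter fun i => π i = i) = {a, b, c} := by
        ext p
        simp only [Finset.mem_filter, Finset.mem_univ, true_and, Finset.mem_insert,
          Finset.mem_singleton]
        refine ⟨hfix p, ?_⟩
        rintro (rfl | rfl | rfl) <;> assumption
      rw [fixedPts, this, Finset.card_eq_three]
      exact ⟨a, b, c, hab.ne, (hab.trans hbc).ne, hbc.ne, rfl⟩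

theorem permF_good {m : ℕ} (τ : Equiv.Perm (Fin (m+1))) (hA : Av τ) (h0 : τ 0 ≠ Fin.last m) :
    Good (permF τ) := by
  have inj : ∀ x y : Fin (m+1), (τ x : ℕ) = τ y → (x : ℕ) = y := fun x y h => by
    rw [τ.injective (Fin.ext h)]
  have inj2 : ∀ x y : Fin (m+1), (x : ℕ) = y → (τ x : ℕ) = τ y := fun x y h => by
    rw [Fin.ext h]
  have h0' : (τ 0 : ℕ) ≠ m := fun h => h0 (Fin.ext (by simpa using h))
  have hz : ((0 : Fin (m+1)) : ℕ) = 0 := rfl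
  have hlt := (τ 0).2
  obtain ⟨c, hc⟩ := τ.surjective (Fin.last m)
  have hc' : (τ c : ℕ) = m := by rw [hc]; rfl
  have hc0 : (c : ℕ) ≠ 0 := fun h => h0' (by rw [← inj2 c 0 h, hc'])
  have hcl := c.2
  have i0 := fun e => inj2 e 0
  have ic := fun e => inj e c
  have j0 := fun e => inj e 0
  have jc := fun e => inj2 e c
  refine ⟨fF_invol τ, ⟨τ 0, by omega⟩, ⟨m, by omega⟩, ⟨m + c, by omega⟩, ?_, ?_, ?_, ?_, ?_, ?_, ?_⟩
  · rw [Fin.lt_def]; simp only; omega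
  · rw [Fin.lt_def]; simp only; omega
  · rw [permF_apply]
    apply Fin.ext
    have := fF_spec τ ⟨τ 0, by omega⟩
    simp only at this ⊢
    rcases this with h | ⟨e, h⟩
    · omega
    · have := j0 e; omega
  · rw [permF_apply]
    apply Fin.ext
    have := fF_spec τ ⟨m, by omega⟩
    simp only at this ⊢
    rcases this with h | ⟨e, h⟩ <;> omega
  · rw [permF_apply]
    apply Fin.ext
    have := fF_spec τ ⟨m + c, by omega⟩
    simp only at this ⊢
    rcases this with h | ⟨e, h⟩
    · omega
    · have := jc e; omega
  · intro p hp
    rw [permF_apply] at hp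
    replace hp := congrArg Fin.val hp
    simp only [Fin.ext_iff]
    rcases fF_spec τ p with h | ⟨e, h⟩
    · omega
    · have := i0 e; have := ic e; omega
  · intro i j k hij hjk h1 h2
    have hA' : ∀ x y z : Fin (m+1), (x : ℕ) < y → (y : ℕ) < z → (τ x : ℕ) < τ y →
      (τ y : ℕ) < τ z → False := fun x y z a b c d => hA x y z a b c d
    simp only [permF_apply, Fin.lt_def, Fin.ext_iff] at *
    rcases fF_spec τ i with hi | ⟨ei, hi⟩ <;> rcases fF_spec τ j with hj | ⟨ej, hj⟩ <;>
      rcases fF_spec τ k with hk | ⟨ek, hk⟩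
    · omega
    · omega
    · omega
    · have := inj ej ek; omega
    · omega
    · have := i0 ei; have := ic ek; omega
    · have := inj2 ei ej; omega
    · exfalso
      have a1 := hA' ei ej ek
      have a2 := inj2 ei ej
      have a3 := inj ej ek
      rcases hi with hi | hi | hi | hi <;> rcases hj with hj | hj | hj | hj <;>
        rcases hk with hk | hk | hk | hk <;> first | omega | (exact a1 (by omega) (by omega) (by omega) (by omega))

theorem permF_inj {m : ℕ} (τ ρ : Equiv.Perm (Fin (m+1))) (h : permF τ = permF ρ) : τ = ρ := by
  have key : ∀ e : Fin (m+1), (e : ℕ) ≠ 0 → τ e = ρ e := by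
    intro e he
    have h1 := congrArg (fun f : Equiv.Perm (Fin (2*m+1)) => (f ⟨m + e, by omega⟩ : ℕ)) h
    simp only [permF_apply] at h1
    apply Fin.ext
    rcases fF_spec τ ⟨m + e, by omega⟩ with h | ⟨x, h⟩ <;>
      rcases fF_spec ρ ⟨m + e, by omega⟩ with h' | ⟨x', h'⟩ <;> simp only at h h'
    · omega
    · omega
    · omega
    · have a : (x : ℕ) = e → (τ x : ℕ) = τ e := fun h => by rw [Fin.ext h]
      have b : (x' : ℕ) = e → (ρ x' : ℕ) = ρ e := fun h => by rw [Fin.ext h]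
      omega
  ext e
  congr 1
  by_cases he : e = 0
  · subst he
    obtain ⟨x, hx⟩ := ρ.surjective (τ 0)
    by_cases hx0 : x = 0
    · rw [← hx, hx0]
    · rw [← key x (by rwa [Ne, ← Fin.val_zero (m+1), ← Fin.ext_iff])] at hx
      exact absurd (τ.injective hx) hx0
  · exact key e (by rwa [Ne, ← Fin.val_zero (m+1), ← Fin.ext_iff])

theorem mid {m : ℕ} (π : Equiv.Perm (Fin (2*m+1))) (hI : IsInvolution π)
    (a b c : Fin (2*m+1)) (hab : a < b) (hbc : b < c) (ha : π a = a) (hb : π b = b) (hc : π c = c)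
    (hL : ∀ i, i < b → i ≠ a → b < π i) (hR : ∀ i, b < i → i ≠ c → π i < b) : (b : ℕ) = m := by
  have h1 : ((Finset.Iio b).erase a).card ≤ ((Finset.Ioi b).erase c).card := by
    apply Finset.card_le_card_of_injOn π _ π.injective.injOn
    intro i hi
    simp only [Finset.coe_erase, Finset.coe_Iio, Set.mem_sdiff, Set.mem_Iio,
      Set.mem_singleton_iff, Finset.coe_Ioi, Set.mem_Ioi] at hi ⊢
    refine ⟨hL i hi.1 hi.2, fun h => ?_⟩
    have : i = c := π.injective (h.trans hc.symm)
    exact absurd (hi.1.trans hbc) (by simp [this])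
  have h2 : ((Finset.Ioi b).erase c).card ≤ ((Finset.Iio b).erase a).card := by
    apply Finset.card_le_card_of_injOn π _ π.injective.injOn
    intro i hi
    simp only [Finset.coe_erase, Finset.coe_Iio, Set.mem_sdiff, Set.mem_Iio,
      Set.mem_singleton_iff, Finset.coe_Ioi, Set.mem_Ioi] at hi ⊢
    refine ⟨hR i hi.1 hi.2, fun h => ?_⟩
    have : i = a := π.injective (h.trans ha.symm)
    exact absurd (hab.trans hi.1) (by simp [this])
  rw [Finset.card_erase_of_mem (by simpa), Finset.card_erase_of_mem (by simpa), Fin.card_Iio,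
    Fin.card_Ioi] at h1 h2
  rw [Fin.lt_def] at hab hbc
  omega

theorem permF_surj {m : ℕ} (π : Equiv.Perm (Fin (2*m+1))) (h : Good π) :
    ∃ τ : Equiv.Perm (Fin (m+1)), (Av τ ∧ τ 0 ≠ Fin.last m) ∧ permF τ = π := by
  obtain ⟨hI, a, b, c, hab, hbc, ha, hb, hc, hfix, hocc⟩ := h
  have hL : ∀ i, i < b → i ≠ a → b < π i := by
    intro i hi hia
    by_contra hlt
    have hne : π i ≠ b := fun h => hi.ne (π.injective (h.trans hb.symm))
    exact hia (hocc i b c hi hbc (by rw [hb]; exact lt_of_le_of_ne (not_lt.1 hlt) hne)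
      (by rw [hb, hc]; exact hbc)).1
  have hR : ∀ i, b < i → i ≠ c → π i < b := by
    intro i hi hic
    by_contra hlt
    have hne : π i ≠ b := fun h => hi.ne' (π.injective (h.trans hb.symm))
    exact hic (hocc a b i hab hi (by rw [hb, ha]; exact hab)
      (by rw [hb]; exact lt_of_le_of_ne (not_lt.1 hlt) hne.symm)).2.2
  have hbm := mid π hI a b c hab hbc ha hb hc hL hR
  rw [Fin.lt_def] at hab hbc
  have hcl := c.2
  -- the function
  have hex : ∀ e : Fin (m+1), ∃ v : Fin (m+1),
      ((e : ℕ) = 0 ∧ (v : ℕ) = a) ∨ 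
      (0 < (e : ℕ) ∧ (m + e : ℕ) = c ∧ (v : ℕ) = m) ∨
      (0 < (e : ℕ) ∧ (m + e : ℕ) ≠ c ∧ (v : ℕ) < m ∧ (v : ℕ) ≠ a ∧
        (π ⟨m + e, by omega⟩ : ℕ) = v ∧ ∃ hv : (v : ℕ) < 2*m+1, (π ⟨v, hv⟩ : ℕ) = m + e) := by
    intro e
    by_cases h0 : (e : ℕ) = 0
    · exact ⟨⟨a, by omega⟩, Or.inl ⟨h0, rfl⟩⟩
    by_cases h1 : (m + e : ℕ) = c
    · exact ⟨⟨m, by omega⟩, Or.inr (Or.inl ⟨by omega, h1, rfl⟩)⟩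
    have h2 := hR ⟨m + e, by omega⟩ (by rw [Fin.lt_def]; simp only; omega)
      (fun h => h1 (congrArg Fin.val h))
    rw [Fin.lt_def, hbm] at h2
    refine ⟨⟨π ⟨m + e, by omega⟩, by omega⟩, Or.inr (Or.inr ⟨by omega, h1, h2, ?_, rfl, by simp only; omega, ?_⟩)⟩
    · intro h
      have h3 : (⟨m + e, by omega⟩ : Fin (2*m+1)) = a := π.injective ((Fin.ext h).trans ha.symm)
      have := congrArg Fin.val h3
      simp only at this
      omega
    · exact congrArg Fin.val (hI ⟨m + e, by omega⟩)
  choose t ht using hex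
  have tinj : Function.Injective t := by
    intro x y hxy
    have hv := congrArg Fin.val hxy
    apply Fin.ext
    rcases ht x with h | h | ⟨h1, h2, h3, h4, h5, h6, h7⟩ <;>
      rcases ht y with h' | h' | ⟨h1', h2', h3', h4', h5', h6', h7'⟩ <;> try omega
    have : (⟨t x, h6⟩ : Fin (2*m+1)) = ⟨t y, h6'⟩ := Fin.ext hv
    rw [this] at h7
    omega
  set τ : Equiv.Perm (Fin (m+1)) := Equiv.ofBijective t (Finite.injective_iff_bijective.1 tinj)
    with hτ
  have hτt : ∀ e, τ e = t e := fun e => rfl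
  have hz : ((0 : Fin (m+1)) : ℕ) = 0 := rfl
  refine ⟨τ, ⟨?_, ?_⟩, ?_⟩
  · intro x y z hxy hyz h1 h2
    rw [hτt, hτt, Fin.lt_def] at h1 h2
    rw [Fin.lt_def] at hxy hyz
    -- middle point
    obtain ⟨y1, y2, y3, y4, y5, -⟩ : (0 < (y : ℕ) ∧ (m + y : ℕ) ≠ c ∧ (t y : ℕ) < m ∧ (t y : ℕ) ≠ a ∧
        (π ⟨m + y, by omega⟩ : ℕ) = t y ∧ True) := by
      rcases ht y with h | h | h
      · omega
      · have := (t z).2; omega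
      · exact ⟨h.1, h.2.1, h.2.2.1, h.2.2.2.1, h.2.2.2.2.1, trivial⟩
    obtain ⟨z', hz1, hz2⟩ : ∃ z' : Fin (2*m+1), (z' : ℕ) = m + z ∧ (t y : ℕ) < π z' := by
      refine ⟨⟨m + z, by omega⟩, rfl, ?_⟩
      rcases ht z with h | h | h
      · omega
      · have : (⟨m + z, by omega⟩ : Fin (2*m+1)) = c := Fin.ext h.2.1
        rw [this, hc]; omega
      · omega
    obtain ⟨x', hx1, hx2⟩ : ∃ x' : Fin (2*m+1), (x' : ℕ) < m + y ∧ (π x' : ℕ) < t y := by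
      rcases ht x with h | h | h
      · exact ⟨a, by omega, by rw [ha]; omega⟩
      · omega
      · exact ⟨⟨m + x, by omega⟩, by simp only; omega, by omega⟩
    have := (hocc x' ⟨m + y, by omega⟩ z' (by rw [Fin.lt_def]; exact hx1)
      (by rw [Fin.lt_def]; simp only; omega) (by rw [Fin.lt_def]; omega)
      (by rw [Fin.lt_def]; omega)).2.1
    have := congrArg Fin.val this
    simp only at this
    omega
  · intro h
    have h := congrArg Fin.val h
    rw [hτt, Fin.val_last] at h
    rcases ht 0 with h' | h' | h' <;> omega
  · ext p
    rw [permF_apply]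
    rcases fF_spec τ p with h | ⟨e, h⟩
    · have : p = b := Fin.ext (by omega)
      rw [this, hb, ← this]; omega
    · rw [hτt] at h
      rcases ht e with h' | h' | ⟨h1, h2, h3, h4, h5, h6, h7⟩
      · have : p = a := Fin.ext (by omega)
        rw [this, ha, ← this]; omega
      · have : p = c := Fin.ext (by omega)
        rw [this, hc, ← this]; omega
      · rcases h with h | h | h | h
        · omega
        · have : p = ⟨t e, h6⟩ := Fin.ext (by simp only; omega)
          rw [h.2.2.1, ← h7, ← this]
        · omega
        · have : p = ⟨m + e, by omega⟩ := Fin.ext (by simp only; omega)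
          rw [h.2.2.1, ← h5, ← this]

theorem count_eq (m : ℕ) : iCountOnce123 (2*m+1) 3 + catalan m = catalan (m+1) := by
  rw [← card_Av_last m]
  congr 1
  unfold iCountOnce123
  symm
  rw [Nat.card_congr (Equiv.subtypeEquivRight good_iff)]
  apply Nat.card_eq_of_bijective
    (fun x : {τ : Equiv.Perm (Fin (m+1)) // Av τ ∧ τ 0 ≠ Fin.last m} =>
      (⟨permF x.1, permF_good x.1 x.2.1 x.2.2⟩ : {π : Equiv.Perm (Fin (2*m+1)) // Good π}))
  constructor
  · intro x y h
    exact Subtype.ext (permF_inj _ _ (congrArg Subtype.val h))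
  · rintro ⟨π, h⟩
    obtain ⟨τ, h1, h2⟩ := permF_surj π h
    exact ⟨⟨τ, h1⟩, Subtype.ext h2⟩

theorem arith (m X : ℕ) (h : X + catalan (m+1) = catalan (m+2)) :
    (2*(m+1)+1) * X = 3 * (2*(m+1)+1).choose m := by
  have h1 := succ_mul_catalan_eq_centralBinom (m+1)
  have h2 := succ_mul_catalan_eq_centralBinom (m+2)
  have h3 := Nat.succ_mul_centralBinom_succ (m+1)
  rw [Nat.centralBinom_eq_two_mul_choose (m+1)] at h1 h3
  -- choose relations
  have e1 : (2*(m+1)).succ.choose (m+1).succ * (m+1).succ = (2*(m+1)).succ * (2*(m+1)).choose (m+1) :=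
    (Nat.add_one_mul_choose_eq (2*(m+1)) (m+1)).symm
  have e2 := Nat.choose_succ_right_eq (2*(m+1)+1) m
  have e3 : (2*(m+1)+1).choose (m+1) = (2*(m+1)+1).choose (m+2) :=
    Nat.choose_symm_of_eq_add (by ring)
  have e4 : 2*(m+1)+1 - m = m+3 := by omega
  rw [e4, e3] at e2
  simp only [Nat.succ_eq_add_one] at e1
  rw [← h2, ← h1] at h3
  rw [← h1] at e1
  have e5 : m+1+1 = m+2 := rfl
  have e6 : m+2+1 = m+3 := rfl
  simp only [e5, e6] at *
  generalize catalan (m+1) = a at *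
  generalize catalan (m+2) = b at *
  generalize (2*(m+1)+1).choose (m+2) = u at *
  generalize (2*(m+1)+1).choose m = w at *
  have h3' : (m+3) * b = 2 * (2*(m+1)+1) * a := by
    apply Nat.eq_of_mul_eq_mul_left (show 0 < m+2 by omega)
    linarith
  have e1' : u = (2*(m+1)+1) * a := by
    apply Nat.eq_of_mul_eq_mul_left (show 0 < m+2 by omega)
    linarith
  apply Nat.eq_of_mul_eq_mul_left (show 0 < m+3 by omega)
  subst h
  subst e1'
  have h5 : (m+3) * X = (3*m+3) * a := by linarith
  calc (m+3) * ((2*(m+1)+1) * X) = (2*(m+1)+1) * ((m+3) * X) := by ring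
    _ = 3 * ((2*(m+1)+1) * a * (m+1)) := by rw [h5]; ring
    _ = _ := by rw [e2]; ring

/-- For every odd `n ≥ 3`, `n · i_n^3(∅;123) = 3 · C(n, (n-3)/2)`, and moreover
`i_n^3(∅;123) = C_{(n+1)/2} - C_{(n-1)/2}` where `C_m` is the `m`-th Catalan number. -/
theorem statement9 (n : ℕ) (hn : 3 ≤ n) (hodd : Odd n) :
    n * iCountOnce123 n 3 = 3 * n.choose ((n - 3) / 2) ∧
    iCountOnce123 n 3 = catalan ((n + 1) / 2) - catalan ((n - 1) / 2) := by
  obtain ⟨m, rfl⟩ := hodd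
  have hm : 1 ≤ m := by omega
  obtain ⟨m, rfl⟩ := Nat.exists_eq_add_of_le' hm
  have h := count_eq (m+1)
  have e1 : (2*(m+1)+1-3)/2 = m := by omega
  have e2 : (2*(m+1)+1+1)/2 = m+2 := by omega
  have e3 : (2*(m+1)+1-1)/2 = m+1 := by omega
  rw [e1, e2, e3]
  exact ⟨arith m _ h, by rw [← h]; omega⟩
end

section
/- For every n ≥ 1 and every k ≠ 3, there is no involution of {1,2,…,n} with exactly k fixed points containing the pattern 123 exactly once; that is, i_n^k(∅;123) = 0 whenever k ≠ 3 (and also whenever n is even). -/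
theorem fixedPts_eq_three {n : ℕ} (π : Equiv.Perm (Fin n)) (hi : IsInvolution π)
    (ho : occ123 π = 1) : fixedPts π = 3 := by
  unfold occ123 at ho
  rw [Nat.card_eq_one_iff_unique] at ho
  obtain ⟨hs, ⟨⟨⟨a, b, c⟩, hab, hbc, h1, h2⟩⟩⟩ := ho
  simp only at hab hbc h1 h2
  have key : ∀ x y z : Fin n, x < y → y < z → π x < π y → π y < π z →
      x = a ∧ y = b ∧ z = c := by
    intro x y z hxy hyz h3 h4
    have := hs.elim ⟨(x, y, z), hxy, hyz, h3, h4⟩ ⟨(a, b, c), hab, hbc, h1, h2⟩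
    simpa using this
  obtain ⟨ha, hb, hc⟩ := key (π a) (π b) (π c) h1 h2
    (by rw [hi, hi]; exact hab) (by rw [hi, hi]; exact hbc)
  have hset : (Finset.univ.filter fun i => π i = i) = {a, b, c} := by
    ext d
    simp only [Finset.mem_filter, Finset.mem_univ, true_and, Finset.mem_insert,
      Finset.mem_singleton]
    constructor
    · intro hd
      rcases lt_trichotomy d b with hdb | hdb | hdb
      · exact Or.inl (key d b c hdb hbc (by rw [hd, hb]; exact hdb) h2).1
      · exact Or.inr (Or.inl hdb)
      · exact Or.inr (Or.inr (key a b d hab hdb h1 (by rw [hd, hb]; exact hdb)).2.2)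
    · rintro (rfl | rfl | rfl) <;> assumption
  unfold fixedPts
  rw [hset]
  exact Finset.card_eq_three.mpr ⟨a, b, c, hab.ne, (hab.trans hbc).ne, hbc.ne, rfl⟩

theorem fixedPts_parity {n : ℕ} (π : Equiv.Perm (Fin n)) (hi : IsInvolution π) :
    n ≡ fixedPts π [MOD 2] := by
  have : Fact (Nat.Prime 2) := ⟨Nat.prime_two⟩
  have h := Equiv.Perm.card_fixedPoints_modEq (f := (show Function.End (Fin n) from fun i => π i)) (p := 2) (n := 1)
    (by funext i; exact hi i)
  rw [Fintype.card_fin] at h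
  convert h using 1
  unfold fixedPts
  rw [Fintype.card_subtype]
  congr 1

/-- For every `n ≥ 1`, `i_n^k(∅;123) = 0` whenever `k ≠ 3`, and also whenever `n` is
even. -/
theorem statement10 (n k : ℕ) (hn : 1 ≤ n) (h : k ≠ 3 ∨ Even n) :
    iCountOnce123 n k = 0 := by
  unfold iCountOnce123
  rw [Nat.card_eq_zero]
  left
  refine ⟨?_⟩
  rintro ⟨π, hi, ho, hk⟩
  have h3 := fixedPts_eq_three π hi ho
  rcases h with h | h
  · omega
  · have h2 := fixedPts_parity π hi
    rw [h3] at h2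
    have := Nat.even_iff.mp h
    unfold Nat.ModEq at h2
    omega
end

section
/- For all integers n ≥ 3 and 1 ≤ k ≤ n with n + k even, the number of involutions of {1,2,…,n} with exactly k fixed points that contain the pattern 132 exactly once equals ((k+1)/(n-1))·C(n-1, (n+k)/2), i.e. (n-1)·i_n^k(∅;132) = (k+1)·C(n-1, (n+k)/2); when k = 0 or n + k is odd this number is 0. -/
/-- The number of occurrences of the pattern 132 in a permutation of `Fin n`. -/
noncomputable def occ132 {n : ℕ} (π : Equiv.Perm (Fin n)) : ℕ :=
  Nat.card {t : Fin n × Fin n × Fin n //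
    t.1 < t.2.1 ∧ t.2.1 < t.2.2 ∧ (π t.1 < π t.2.2 ∧ π t.2.2 < π t.2.1)}

/-- `i_n^k(∅;132)`: the number of involutions of `{1, …, n}` with exactly `k` fixed
points containing the pattern 132 exactly once. -/
noncomputable def iCountOnce132 (n k : ℕ) : ℕ :=
  Nat.card {π : Equiv.Perm (Fin n) // IsInvolution π ∧ occ132 π = 1 ∧ fixedPts π = k}


def NInv (n : ℕ) (f : ℕ → ℕ) : Prop := (∀ x, f (f x) = x) ∧ ∀ x, n ≤ x → f x = x

def Oc (f : ℕ → ℕ) (p q r : ℕ) : Prop := p < q ∧ q < r ∧ f p < f r ∧ f r < f q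

def ocSet (n : ℕ) (f : ℕ → ℕ) : Set (ℕ × ℕ × ℕ) :=
  {t | t.2.2 < n ∧ Oc f t.1 t.2.1 t.2.2}

noncomputable def occN (n : ℕ) (f : ℕ → ℕ) : ℕ := (ocSet n f).ncard

def fxN (n : ℕ) (f : ℕ → ℕ) : ℕ := ((Finset.range n).filter (fun x => f x = x)).card

def SN (n c k : ℕ) : Set (ℕ → ℕ) := {f | NInv n f ∧ occN n f = c ∧ fxN n f = k}

def Cut (N s : ℕ) (f : ℕ → ℕ) : Prop := ∀ p q, p < s → s ≤ q → q < N → f q < f p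

lemma NInv.lt {n f} (h : NInv n f) {x : ℕ} (hx : x < n) : f x < n := by
  by_contra hc
  have := h.2 (f x) (by omega)
  rw [h.1] at this
  omega

lemma NInv.inj {n f} (h : NInv n f) : Function.Injective f := by
  intro a b hab
  rw [← h.1 a, ← h.1 b, hab]

lemma ninv_finite (n : ℕ) : {f | NInv n f}.Finite := by
  apply Set.Finite.of_injOn (f := fun (f : ℕ → ℕ) => (fun i : Fin n => (Fin.ofNat (n+1) (f i))))
    (t := Set.univ) (fun _ _ => Set.mem_univ _) ?_ Set.finite_univ
  intro f hf g hg hfg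
  funext x
  by_cases hx : x < n
  · have h1 := congrFun hfg ⟨x, hx⟩
    have h2 := congrArg Fin.val h1
    have a := hf.lt hx
    have b := hg.lt hx
    simp [Fin.ofNat] at h2
    rwa [Nat.mod_eq_of_lt (by omega), Nat.mod_eq_of_lt (by omega)] at h2
  · rw [hf.2 x (by omega), hg.2 x (by omega)]

lemma SN_finite (n c k : ℕ) : (SN n c k).Finite :=
  (ninv_finite n).subset (fun _ h => h.1)

lemma ocSet_finite (n f) : (ocSet n f).Finite := by
  apply Set.Finite.subset (Set.Finite.prod (Set.finite_lt_nat n)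
    (Set.Finite.prod (Set.finite_lt_nat n) (Set.finite_lt_nat n)))
  rintro ⟨p, q, r⟩ ⟨h, h1, h2, -⟩
  simp at *
  omega

lemma occN_zero {n f} : occN n f = 0 ↔ ∀ p q r, r < n → ¬ Oc f p q r := by
  unfold occN
  rw [Set.ncard_eq_zero (ocSet_finite n f)]
  constructor
  · intro h p q r hr ho
    have : (p, q, r) ∈ ocSet n f := ⟨hr, ho⟩
    rw [h] at this
    exact this
  · intro h
    ext ⟨p, q, r⟩
    simp only [Set.mem_empty_iff_false, iff_false]
    exact fun h' => h p q r h'.1 h'.2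

lemma occN_one {n f} : occN n f = 1 ↔ ∃ a b c, c < n ∧ Oc f a b c ∧
    ∀ p q r, r < n → Oc f p q r → p = a ∧ q = b ∧ r = c := by
  unfold occN
  rw [Set.ncard_eq_one]
  constructor
  · rintro ⟨⟨a, b, c⟩, h⟩
    have h1 : (a, b, c) ∈ ocSet n f := by rw [h]; rfl
    refine ⟨a, b, c, h1.1, h1.2, ?_⟩
    intro p q r hr ho
    have : (p, q, r) ∈ ocSet n f := ⟨hr, ho⟩
    rw [h] at this
    simpa using this
  · rintro ⟨a, b, c, hc, ho, hu⟩
    refine ⟨(a, b, c), ?_⟩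
    ext ⟨p, q, r⟩
    constructor
    · intro h'
      have := hu p q r h'.1 h'.2
      simp [this]
    · intro h'
      have : p = a ∧ q = b ∧ r = c := by simpa using h'
      obtain ⟨rfl, rfl, rfl⟩ := this
      exact ⟨hc, ho⟩

lemma occ_transport {N M : ℕ} {f g D U : ℕ → ℕ} {P Q : ℕ → Prop}
    (hD : ∀ y, P y → y < N → Q (D y) ∧ D y < M ∧ U (D y) = y)
    (hU : ∀ y, Q y → y < M → P (U y) ∧ U y < N ∧ D (U y) = y)
    (hDm : ∀ y z, P y → P z → y < z → z < N → D y < D z)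
    (hUm : ∀ y z, Q y → Q z → y < z → z < M → U y < U z)
    (hfP : ∀ y, P y → y < N → P (f y) ∧ f y < N)
    (hgD : ∀ y, P y → y < N → g (D y) = D (f y))
    (hf : ∀ p q r, r < N → Oc f p q r → P p ∧ P q ∧ P r)
    (hg : ∀ p q r, r < M → Oc g p q r → Q p ∧ Q q ∧ Q r) :
    occN N f = occN M g := by
  unfold occN
  refine Set.ncard_congr (fun t _ => (D t.1, D t.2.1, D t.2.2)) ?_ ?_ ?_
  · rintro ⟨p, q, r⟩ ⟨hr, ho⟩
    obtain ⟨hp, hq, hr'⟩ := hf p q r hr ho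
    obtain ⟨h1, h2, h3, h4⟩ := ho
    simp only at *
    have fp := hfP p hp (by omega)
    have fq := hfP q hq (by omega)
    have fr := hfP r hr' (by omega)
    refine ⟨(hD r hr' hr).2.1, hDm _ _ hp hq h1 (by omega), hDm _ _ hq hr' h2 (by omega), ?_, ?_⟩
    · simp only
      rw [hgD p hp (by omega), hgD r hr' (by omega)]
      exact hDm _ _ fp.1 fr.1 h3 fr.2
    · simp only
      rw [hgD q hq (by omega), hgD r hr' (by omega)]
      exact hDm _ _ fr.1 fq.1 h4 fq.2
  · rintro ⟨p, q, r⟩ ⟨p', q', r'⟩ ⟨hr, ho⟩ ⟨hr', ho'⟩ h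
    obtain ⟨a1, a2, a3⟩ := hf p q r hr ho
    obtain ⟨b1, b2, b3⟩ := hf p' q' r' hr' ho'
    simp only [Prod.mk.injEq] at h
    obtain ⟨e1, e2, e3⟩ := h
    have l1 := ho.1
    have l2 := ho.2.1
    have l3 := ho'.1
    have l4 := ho'.2.1
    simp only at *
    rw [Prod.mk.injEq, Prod.mk.injEq]
    refine ⟨?_, ?_, ?_⟩
    · rw [← (hD p a1 (by omega)).2.2, e1, (hD p' b1 (by omega)).2.2]
    · rw [← (hD q a2 (by omega)).2.2, e2, (hD q' b2 (by omega)).2.2]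
    · rw [← (hD r a3 (by omega)).2.2, e3, (hD r' b3 (by omega)).2.2]
  · rintro ⟨p, q, r⟩ ⟨hr, ho⟩
    obtain ⟨hp, hq, hr'⟩ := hg p q r hr ho
    obtain ⟨h1, h2, h3, h4⟩ := ho
    simp only at *
    obtain ⟨p1, p2, p3⟩ := hU p hp (by omega)
    obtain ⟨q1, q2, q3⟩ := hU q hq (by omega)
    obtain ⟨r1, r2, r3⟩ := hU r hr' (by omega)
    have gp := hgD _ p1 p2
    have gq := hgD _ q1 q2
    have gr := hgD _ r1 r2
    rw [p3] at gp
    rw [q3] at gq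
    rw [r3] at gr
    have fp := hfP _ p1 p2
    have fq := hfP _ q1 q2
    have fr := hfP _ r1 r2
    have Fp := hD _ fp.1 fp.2
    have Fq := hD _ fq.1 fq.2
    have Fr := hD _ fr.1 fr.2
    rw [← gp] at Fp
    rw [← gq] at Fq
    rw [← gr] at Fr
    refine ⟨(U p, U q, U r), ⟨r2, hUm _ _ hp hq h1 (by omega), hUm _ _ hq hr' h2 (by omega),
      ?_, ?_⟩, ?_⟩
    · simp only
      rw [← Fp.2.2, ← Fr.2.2]
      exact hUm _ _ Fp.1 Fr.1 h3 Fr.2.1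
    · simp only
      rw [← Fq.2.2, ← Fr.2.2]
      exact hUm _ _ Fr.1 Fq.1 h4 Fq.2.1
    · simp only [p3, q3, r3]

/-- arithmetic form of a cut -/
lemma cut_arith {N s f} (h : NInv N f) (hs : s ≤ N) (hc : Cut N s f) :
    (∀ p, p < s → N - s ≤ f p) ∧ (∀ q, s ≤ q → q < N → f q < N - s) := by
  constructor
  · intro p hp
    have := Finset.card_le_card_of_injOn (s := Finset.Ico s N) (t := Finset.range (f p)) f
      (by
        intro q hq
        simp at hq ⊢
        exact hc p q hp hq.1 hq.2) (h.inj.injOn)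
    simpa using this
  · intro q hq hqN
    have := Finset.card_le_card_of_injOn (s := Finset.range s) (t := Finset.Ioo (f q) N) f
      (by
        intro p hp
        simp at hp ⊢
        exact ⟨hc p q hp hq hqN, h.lt (by omega)⟩) (h.inj.injOn)
    have h2 := h.lt hqN
    simp at this
    omega

/-- closed form -/
lemma closed (A : ℕ → ℕ → ℕ) (h00 : A 0 0 = 1) (h0 : ∀ k, A 0 (k+1) = 0)
    (h1 : ∀ m, A (m+1) 0 = A m 1)
    (h2 : ∀ m k, A (m+1) (k+1) = A m k + A m (k+2)) :
    ∀ m k, (Odd (m+k) → A m k = 0) ∧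
      (∀ s, m + k = 2 * s → (m+1) * A m k = (k+1) * (m+1).choose (s+1)) := by
  have key : ∀ m s k : ℕ, m + 1 + k = 2 * s → ∀ x y : ℕ,
      (m+1) * x = k * (m+1).choose s → (m+1) * y = (k+2) * (m+1).choose (s+1) →
      (m+2) * (x + y) = (k+1) * (m+2).choose (s+1) := by
    intro m s k hs x y hx hy
    have p := Nat.choose_succ_succ (m+1) s
    have e : (s+1) * ((m+1).choose (s+1) : ℤ) = (m+1-s) * (m+1).choose s := by
      have := Nat.choose_succ_right_eq (m+1) s
      by_cases hsm : s ≤ m + 1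
      · zify [hsm] at this
        linarith
      · rw [Nat.choose_eq_zero_of_lt (show m + 1 < s by omega),
          Nat.choose_eq_zero_of_lt (show m + 1 < s + 1 by omega)]
        simp
    have hm : (m + 1 : ℤ) ≠ 0 := by positivity
    zify at *
    apply mul_left_cancel₀ hm
    have hk : (k : ℤ) = 2 * s - m - 1 := by linarith
    rw [show ((m:ℤ) + 2) = m+1+1 by ring] at *
    have p' : (((m+2).choose (s+1) : ℕ) : ℤ) = (m+1).choose s + (m+1).choose (s+1) := by
      exact_mod_cast p
    rw [p']
    calc ((m:ℤ)+1) * ((m+1+1) * (x+y)) = (m+2) * ((m+1)*x + (m+1)*y) := by ring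
      _ = _ := by
        rw [hx, hy, hk]
        linear_combination 2 * e
  intro m
  induction m with
  | zero =>
    intro k
    rcases k with _ | k
    · refine ⟨by simp, ?_⟩
      intro s hs
      have : s = 0 := by omega
      subst this
      simp [h00]
    · refine ⟨fun _ => h0 k, ?_⟩
      intro s hs
      rw [h0, Nat.choose_eq_zero_of_lt (by omega)]
      simp
  | succ m ih =>
    intro k
    rcases k with _ | k
    · refine ⟨fun h => ?_, ?_⟩
      · rw [h1]; exact (ih 1).1 h
      · intro s hs
        rw [h1]
        have := key m s 0 (by omega) 0 (A m 1) (by simp) ((ih 1).2 s (by omega))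
        simpa using this
    · refine ⟨fun h => ?_, ?_⟩
      · rw [h2, (ih k).1 (by grind), (ih (k+2)).1 (by grind)]
      · intro s hs
        rw [h2]
        obtain ⟨s, rfl⟩ : ∃ s', s = s' + 1 := ⟨s - 1, by omega⟩
        exact key m (s+1) (k+1) (by omega) _ _ ((ih k).2 s (by omega)) ((ih (k+2)).2 (s+1) (by omega))


lemma ninv_fix {n f} : (NInv (n+1) f ∧ f n = n) ↔ NInv n f := by
  constructor
  · rintro ⟨h, hn⟩
    refine ⟨h.1, fun x hx => ?_⟩
    rcases Nat.eq_or_lt_of_le hx with rfl | hx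
    · exact hn
    · exact h.2 x hx
  · intro h
    exact ⟨⟨h.1, fun x hx => h.2 x (by omega)⟩, h.2 n le_rfl⟩

lemma occ_fix {n f} (h : NInv n f) : occN (n+1) f = occN n f := by
  unfold occN
  congr 1
  ext ⟨p, q, r⟩
  simp only [ocSet, Set.mem_ofPred_eq]
  constructor
  · rintro ⟨hr, ho⟩
    refine ⟨?_, ho⟩
    by_contra hc
    have hrn : r = n := by omega
    subst hrn
    have h1 := h.2 r le_rfl
    have h2 := h.lt ho.2.1
    have h3 := ho.2.2.2
    omega
  · rintro ⟨hr, ho⟩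
    exact ⟨by omega, ho⟩

lemma fx_fix {n f} (h : NInv n f) : fxN (n+1) f = fxN n f + 1 := by
  unfold fxN
  rw [Finset.range_add_one, Finset.filter_insert, if_pos (h.2 n le_rfl), Finset.card_insert_of_notMem]
  simp

lemma SN_fix_zero (n c : ℕ) : {f ∈ SN (n+1) c 0 | f n = n} = ∅ := by
  ext f
  simp only [Set.mem_ofPred_eq, Set.mem_empty_iff_false, iff_false]
  rintro ⟨⟨h, h1, h2⟩, h3⟩
  have := fx_fix (ninv_fix.1 ⟨h, h3⟩)
  omega

lemma SN_fix_succ (n c k : ℕ) : {f ∈ SN (n+1) c (k+1) | f n = n} = SN n c k := by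
  ext f
  simp only [Set.mem_ofPred_eq, SN]
  constructor
  · rintro ⟨⟨h, h1, h2⟩, h3⟩
    have hi := ninv_fix.1 ⟨h, h3⟩
    have := fx_fix hi
    have := occ_fix hi
    exact ⟨hi, by omega, by omega⟩
  · rintro ⟨hi, h1, h2⟩
    have := fx_fix hi
    have := occ_fix hi
    have h4 := ninv_fix.2 hi
    exact ⟨⟨h4.1, by omega, by omega⟩, h4.2⟩

def Dm (n j y : ℕ) : ℕ := if j < y ∧ y < n - j then y - 1 else y
def Um (n j y : ℕ) : ℕ := if j ≤ y ∧ y + 1 < n - j then y + 1 else y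

def toG (n j : ℕ) (f : ℕ → ℕ) (y : ℕ) : ℕ :=
  if y = n - 1 - j then y else if y < n then Dm n j (f (Um n j y)) else y
def toF (n j : ℕ) (g : ℕ → ℕ) (y : ℕ) : ℕ :=
  if y = j then n else if y = n then j else Um n j (g (Dm n j y))

structure XA (n j : ℕ) (f : ℕ → ℕ) : Prop where
  inv : NInv (n+1) f
  hj : 2 * j + 1 ≤ n
  fn : f n = j
  fj : f j = n
  lo : ∀ p, p < j → n - j ≤ f p ∧ f p < n
  mid : ∀ p, j < p → p < n - j → j < f p ∧ f p < n - j
  hi : ∀ p, n - j ≤ p → p < n → f p < j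

structure YA (n j : ℕ) (g : ℕ → ℕ) : Prop where
  inv : NInv n g
  hj : 2 * j + 1 ≤ n
  fx : g (n - 1 - j) = n - 1 - j
  lo : ∀ p, p < j → n - j ≤ g p ∧ g p < n
  mid : ∀ p, j ≤ p → p < n - 1 - j → j ≤ g p ∧ g p < n - 1 - j
  hi : ∀ p, n - j ≤ p → p < n → g p < j

lemma XA_iff {n j f} : XA n j f ↔ (NInv (n+1) f ∧ f n = j ∧ j < n ∧ Cut (n+1) (j+1) f) := by
  constructor
  · intro h
    obtain ⟨inv, hj, fn, fj, lo, mid, hi⟩ := h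
    refine ⟨inv, fn, by omega, ?_⟩
    intro p q hp hq hqn
    have hfq : f q < n - j := by
      by_cases h1 : q = n
      · subst h1; omega
      by_cases h2 : q < n - j
      · exact (mid q (by omega) h2).2
      · have := hi q (by omega) (by omega); omega
    by_cases h3 : p = j
    · subst h3; omega
    · have := lo p (by omega); omega
  · rintro ⟨inv, fn, hj, hc⟩
    obtain ⟨c1, c2⟩ := cut_arith inv (by omega) hc
    have hj2 := c2 n (by omega) (by omega)
    have fj : f j = n := by rw [← fn, inv.1]
    have hlo : ∀ p, p < j → n - j ≤ f p ∧ f p < n := by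
      intro p hp
      have := c1 p (by omega)
      have h2 := inv.lt (show p < n+1 by omega)
      have h3 : f p ≠ n := by
        intro h
        have := inv.inj (h.trans fj.symm)
        omega
      omega
    have hne : ∀ p, p ≠ n → f p ≠ j := by
      intro p hp h
      exact hp (inv.inj (h.trans fn.symm))
    refine ⟨inv, by omega, fn, fj, hlo, ?_, ?_⟩
    · intro p hp hpn
      have h1 := c2 p (by omega) (by omega)
      refine ⟨?_, by omega⟩
      by_contra hcon
      have h2 := hne p (by omega)
      have h3 := hlo (f p) (by omega)
      rw [inv.1] at h3
      omega
    · intro p hp hpn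
      have h2 := hne p (by omega)
      by_contra hcon
      have h4 := inv.lt (show p < n + 1 by omega)
      have h3 := c2 (f p) (by omega) (by omega)
      rw [inv.1] at h3
      omega

lemma YA_iff {n x g} (hx : x < n) : YA n (n-1-x) g ↔ (NInv n g ∧ g x = x ∧ Cut n (x+1) g) := by
  have e : n - 1 - (n - 1 - x) = x := by omega
  constructor
  · intro h
    obtain ⟨inv, hj, fx, lo, mid, hi⟩ := h
    rw [e] at *
    refine ⟨inv, fx, ?_⟩
    intro p q hp hq hqn
    have hfq := hi q (by omega) (by omega)
    by_cases h1 : p = x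
    · subst h1; omega
    by_cases h2 : p < n - 1 - x
    · have := lo p h2; omega
    · have := mid p (by omega) (by omega); omega
  · rintro ⟨inv, fx, hc⟩
    obtain ⟨c1, c2⟩ := cut_arith inv (by omega) hc
    have hx1 := c1 x (by omega)
    have hlo : ∀ p, p < n - 1 - x → n - (n-1-x) ≤ g p ∧ g p < n := by
      intro p hp
      have h2 := inv.lt (show p < n by omega)
      have h3 : g p ≠ x := by
        intro h
        have := inv.inj (h.trans fx.symm)
        omega
      refine ⟨?_, h2⟩
      by_contra hcon
      have := c1 (g p) (by omega)
      rw [inv.1] at this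
      omega
    refine ⟨inv, by omega, by rw [e]; exact fx, hlo, ?_, ?_⟩
    · intro p hp hpn
      have h1 := c1 p (by omega)
      refine ⟨by omega, ?_⟩
      have h3 : g p ≠ x := by
        intro h
        have := inv.inj (h.trans fx.symm)
        omega
      by_contra hcon
      have h2 := inv.lt (show p < n by omega)
      have := c2 (g p) (by omega) h2
      rw [inv.1] at this
      omega
    · intro p hp hpn
      have := c2 p (by omega) hpn
      omega

lemma Um_Dm {n j y} (h1 : y ≠ j) (h : 2 * j + 1 ≤ n) : Um n j (Dm n j y) = y := by
  unfold Um Dm; split_ifs <;> omega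
lemma Dm_Um {n j y} (h1 : y ≠ n - 1 - j) (h : 2 * j + 1 ≤ n) : Dm n j (Um n j y) = y := by
  unfold Um Dm; split_ifs <;> omega

lemma toG_YA {n j f} (h : XA n j f) : YA n j (toG n j f) := by
  obtain ⟨inv, hj, fn, fj, lo, mid, hi⟩ := h
  have big : ∀ y, n ≤ y → toG n j f y = y := by
    intro y hy
    unfold toG
    rw [if_neg (by omega), if_neg (by omega)]
  have fx : toG n j f (n - 1 - j) = n - 1 - j := by simp [toG]
  have hlo : ∀ p, p < j → toG n j f p = f p := by
    intro p hp
    have := lo p hp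
    have hU : Um n j p = p := by unfold Um; split_ifs <;> omega
    unfold toG
    rw [if_neg (by omega), if_pos (by omega), hU]
    unfold Dm; split_ifs <;> omega
  have hmid : ∀ p, j ≤ p → p < n - 1 - j → toG n j f p = f (p+1) - 1 := by
    intro p hp hp2
    have := mid (p+1) (by omega) (by omega)
    have hU : Um n j p = p+1 := by unfold Um; split_ifs <;> omega
    unfold toG
    rw [if_neg (by omega), if_pos (by omega), hU]
    unfold Dm; split_ifs <;> omega
  have hhi : ∀ p, n - j ≤ p → p < n → toG n j f p = f p := by
    intro p hp hpn
    have := hi p hp hpn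
    have hU : Um n j p = p := by unfold Um; split_ifs <;> omega
    unfold toG
    rw [if_neg (by omega), if_pos (by omega), hU]
    unfold Dm; split_ifs <;> omega
  refine ⟨⟨?_, big⟩, hj, fx, ?_, ?_, ?_⟩
  · intro y
    by_cases h1 : n ≤ y
    · rw [big y h1, big y h1]
    by_cases h2 : y = n - 1 - j
    · subst h2; rw [fx, fx]
    by_cases h3 : y < j
    · have := lo y h3
      rw [hlo y h3, hhi _ this.1 this.2, inv.1]
    by_cases h4 : y < n - 1 - j
    · have := mid (y+1) (by omega) (by omega)
      rw [hmid y (by omega) h4, hmid _ (by omega) (by omega),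
        show f (y+1) - 1 + 1 = f (y+1) by omega, inv.1]
      omega
    · have := hi y (by omega) (by omega)
      rw [hhi y (by omega) (by omega), hlo _ this, inv.1]
  · intro p hp; rw [hlo p hp]; exact lo p hp
  · intro p hp hp2
    have := mid (p+1) (by omega) (by omega)
    rw [hmid p hp hp2]; omega
  · intro p hp hp2; rw [hhi p hp hp2]; exact hi p hp hp2

lemma toF_XA {n j g} (h : YA n j g) : XA n j (toF n j g) := by
  obtain ⟨inv, hj, fx, lo, mid, hi⟩ := h
  have fn : toF n j g n = j := by
    unfold toF; rw [if_neg (by omega), if_pos rfl]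
  have fj : toF n j g j = n := by simp [toF]
  have big : ∀ y, n + 1 ≤ y → toF n j g y = y := by
    intro y hy
    have hD : Dm n j y = y := by unfold Dm; split_ifs <;> omega
    unfold toF
    rw [if_neg (by omega), if_neg (by omega), hD, inv.2 y (by omega)]
    unfold Um; split_ifs <;> omega
  have hlo : ∀ p, p < j → toF n j g p = g p := by
    intro p hp
    have := lo p hp
    have hD : Dm n j p = p := by unfold Dm; split_ifs <;> omega
    unfold toF
    rw [if_neg (by omega), if_neg (by omega), hD]
    unfold Um; split_ifs <;> omega
  have hmid : ∀ p, j < p → p < n - j → toF n j g p = g (p-1) + 1 := by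
    intro p hp hp2
    have := mid (p-1) (by omega) (by omega)
    have hD : Dm n j p = p-1 := by unfold Dm; split_ifs <;> omega
    unfold toF
    rw [if_neg (by omega), if_neg (by omega), hD]
    unfold Um; split_ifs <;> omega
  have hhi : ∀ p, n - j ≤ p → p < n → toF n j g p = g p := by
    intro p hp hpn
    have := hi p hp hpn
    have hD : Dm n j p = p := by unfold Dm; split_ifs <;> omega
    unfold toF
    rw [if_neg (by omega), if_neg (by omega), hD]
    unfold Um; split_ifs <;> omega
  refine ⟨⟨?_, big⟩, hj, fn, fj, ?_, ?_, ?_⟩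
  · intro y
    by_cases h1 : n + 1 ≤ y
    · rw [big y h1, big y h1]
    by_cases h2 : y = n
    · subst h2; rw [fn, fj]
    by_cases h2 : y = j
    · subst h2; rw [fj, fn]
    by_cases h3 : y < j
    · have := lo y h3
      rw [hlo y h3, hhi _ this.1 this.2, inv.1]
    by_cases h4 : y < n - j
    · have := mid (y-1) (by omega) (by omega)
      rw [hmid y (by omega) h4, hmid _ (by omega) (by omega),
        show g (y-1) + 1 - 1 = g (y-1) by omega, inv.1]
      omega
    · have := hi y (by omega) (by omega)
      rw [hhi y (by omega) (by omega), hlo _ this, inv.1]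
  · intro p hp; rw [hlo p hp]; exact lo p hp
  · intro p hp hp2
    have := mid (p-1) (by omega) (by omega)
    rw [hmid p hp hp2]; omega
  · intro p hp hp2; rw [hhi p hp hp2]; exact hi p hp hp2

lemma XA.ne {n j f} (h : XA n j f) {y} (h1 : y ≠ j) (h2 : y ≠ n) : f y ≠ j ∧ f y ≠ n := by
  constructor
  · intro e; exact h2 (h.inv.inj (e.trans h.fn.symm))
  · intro e; exact h1 (h.inv.inj (e.trans h.fj.symm))

lemma YA.ne {n j f} (h : YA n j f) {y} (h1 : y ≠ n - 1 - j) : f y ≠ n - 1 - j := by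
  intro e; exact h1 (h.inv.inj (e.trans h.fx.symm))

lemma toF_toG {n j f} (h : XA n j f) : toF n j (toG n j f) = f := by
  funext y
  have hj := h.hj
  unfold toF
  split_ifs with h1 h2
  · rw [h1, h.fj]
  · rw [h2, h.fn]
  · have hU := Um_Dm h1 hj
    have hne := h.ne h1 h2
    unfold toG
    rw [hU]
    have hD : Dm n j y ≠ n - 1 - j := by unfold Dm; split_ifs <;> omega
    rw [if_neg hD]
    split_ifs with h3
    · exact Um_Dm hne.1 hj
    · rw [hU, h.inv.2]
      unfold Dm at h3; split_ifs at h3 <;> omega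

lemma toG_toF {n j g} (h : YA n j g) : toG n j (toF n j g) = g := by
  funext y
  have hj := h.hj
  unfold toG
  split_ifs with h1 h2
  · rw [h1, h.fx]
  · have hU := Dm_Um h1 hj
    have hne := h.ne h1
    have u1 : Um n j y ≠ j := by unfold Um; split_ifs <;> omega
    have u2 : Um n j y ≠ n := by unfold Um; split_ifs <;> omega
    unfold toF
    rw [if_neg u1, if_neg u2, hU, Dm_Um hne hj]
  · rw [h.inv.2 y (by omega)]

lemma toG_occ {n j f} (h : XA n j f) : occN (n+1) f = occN n (toG n j f) := by
  have hY := toG_YA h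
  have hj := h.hj
  refine occ_transport (D := Dm n j) (U := Um n j) (P := fun y => y ≠ j ∧ y ≠ n)
    (Q := fun y => y ≠ n - 1 - j) ?_ ?_ ?_ ?_ ?_ ?_ ?_ ?_
  · intro y hy hyn
    refine ⟨?_, ?_, Um_Dm hy.1 hj⟩ <;> (unfold Dm; split_ifs <;> omega)
  · intro y hy hyn
    refine ⟨⟨?_, ?_⟩, ?_, Dm_Um hy hj⟩ <;> (unfold Um; split_ifs <;> omega)
  · intro y z hy hz hyz hzn
    unfold Dm; split_ifs <;> omega
  · intro y z hy hz hyz hzn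
    unfold Um; split_ifs <;> omega
  · intro y hy hyn
    exact ⟨h.ne hy.1 hy.2, h.inv.lt hyn⟩
  · intro y hy hyn
    have hD : Dm n j y ≠ n - 1 - j := by unfold Dm; split_ifs <;> omega
    have hD2 : Dm n j y < n := by unfold Dm; split_ifs <;> omega
    unfold toG
    rw [if_neg hD, if_pos hD2, Um_Dm hy.1 hj]
  · rintro p q r hr ⟨h1, h2, h3, h4⟩
    have fn := h.fn
    have fj := h.fj
    have bd : ∀ y, y < n + 1 → f y < n + 1 := fun y hy => h.inv.lt hy
    have a1 := bd p (by omega)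
    have a2 := bd q (by omega)
    have a3 := bd r (by omega)
    have lo := h.lo
    have mid := h.mid
    have hi := h.hi
    have cut := (XA_iff.1 h).2.2.2
    have r1 : r ≠ j := by rintro rfl; omega
    have p1 : p ≠ j := by rintro rfl; omega
    have q1 : q ≠ j := by
      rintro rfl
      have := cut p r (by omega) (by omega) (by omega)
      omega
    have r2 : r ≠ n := by
      rintro rfl
      have b1 : ¬ p < j := by intro hh; have := lo p hh; omega
      have b2 : ¬ p < r - j := by intro hh; have := mid p (by omega) hh; omega
      have := hi q (by omega) (by omega)
      omega
    exact ⟨⟨p1, by omega⟩, ⟨q1, by omega⟩, ⟨r1, r2⟩⟩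
  · rintro p q r hr ⟨h1, h2, h3, h4⟩
    obtain ⟨inv, hj, fx, lo, mid, hi⟩ := hY
    have r1 : r ≠ n - 1 - j := by
      rintro rfl
      rw [fx] at h3 h4
      by_cases b : q < j
      · have := lo p (by omega)
        omega
      · have := mid q (by omega) (by omega)
        omega
    have p1 : p ≠ n - 1 - j := by
      rintro rfl
      have := hi r (by omega) (by omega)
      omega
    have q1 : q ≠ n - 1 - j := by
      rintro rfl
      have := hi r (by omega) (by omega)
      by_cases b : p < j
      · have := lo p (by omega)
        omega
      · have := mid p (by omega) (by omega)
        omega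
    exact ⟨p1, q1, r1⟩

lemma toG_fx {n j f} (h : XA n j f) : fxN n (toG n j f) = fxN (n+1) f + 1 := by
  have hY := toG_YA h
  have hj := h.hj
  have key : (Finset.range n).filter (fun x => toG n j f x = x) =
      insert (n-1-j) (((Finset.range (n+1)).filter (fun x => f x = x)).image (Dm n j)) := by
    ext y
    simp only [Finset.mem_filter, Finset.mem_range, Finset.mem_insert, Finset.mem_image]
    constructor
    · rintro ⟨hy, e⟩
      by_cases h1 : y = n - 1 - j
      · exact Or.inl h1
      right
      refine ⟨Um n j y, ⟨?_, ?_⟩, Dm_Um h1 hj⟩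
      · unfold Um; split_ifs <;> omega
      · unfold toG at e
        rw [if_neg h1, if_pos hy] at e
        have u1 : Um n j y ≠ j := by unfold Um; split_ifs <;> omega
        have u2 : Um n j y ≠ n := by unfold Um; split_ifs <;> omega
        have e2 := Um_Dm (h.ne u1 u2).1 hj
        rw [e] at e2
        exact e2.symm
    · rintro (rfl | ⟨z, ⟨hz, e⟩, rfl⟩)
      · exact ⟨by omega, hY.fx⟩
      · have z1 : z ≠ j := by rintro rfl; have := h.fj; omega
        have z2 : z ≠ n := by rintro rfl; have := h.fn; omega
        have d1 : Dm n j z < n := by unfold Dm; split_ifs <;> omega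
        have d2 : Dm n j z ≠ n - 1 - j := by unfold Dm; split_ifs <;> omega
        refine ⟨d1, ?_⟩
        unfold toG
        rw [if_neg d2, if_pos d1, Um_Dm z1 hj, e]
  unfold fxN
  rw [key, Finset.card_insert_of_notMem, Finset.card_image_of_injOn]
  · intro y hy z hz e
    simp at hy hz
    have y1 : y ≠ j := by rintro rfl; have := h.fj; omega
    have z1 : z ≠ j := by rintro rfl; have := h.fj; omega
    rw [← Um_Dm y1 hj, ← Um_Dm z1 hj, e]
  · simp only [Finset.mem_image, Finset.mem_filter, Finset.mem_range, not_exists, not_and]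
    rintro z ⟨hz, e⟩
    have z1 : z ≠ j := by rintro rfl; have := h.fj; omega
    unfold Dm; split_ifs <;> omega

lemma XY_card (n c k : ℕ) :
    {f ∈ SN (n+1) c k | f n < n ∧ Cut (n+1) (f n + 1) f}.ncard =
    {g ∈ SN n c (k+1) | ∃ x, x < n ∧ g x = x ∧ Cut n (x+1) g}.ncard := by
  have hX : ∀ f, f ∈ {f ∈ SN (n+1) c k | f n < n ∧ Cut (n+1) (f n + 1) f} → XA n (f n) f := by
    rintro f ⟨⟨h, -, -⟩, h1, h2⟩
    exact XA_iff.2 ⟨h, rfl, h1, h2⟩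
  refine Set.ncard_congr (fun f _ => toG n (f n) f) ?_ ?_ ?_
  · intro f hf
    have h := hX f hf
    have hY := toG_YA h
    have hj := h.hj
    have h1 := hf.1.2.1
    have h2 := hf.1.2.2
    have h3 := toG_occ h
    have h4 := toG_fx h
    refine ⟨⟨hY.inv, by omega, by omega⟩, n - 1 - f n, by omega, ?_⟩
    have h5 : YA n (n - 1 - (n - 1 - f n)) (toG n (f n) f) := by
      rw [show n - 1 - (n - 1 - f n) = f n by omega]; exact hY
    exact ((YA_iff (by omega)).1 h5).2
  · intro f f' hf hf' e
    have h := hX f hf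
    have h' := hX f' hf'
    have y := toG_YA h
    have y' := toG_YA h'
    have ej : f n = f' n := by
      have := y.hj
      have := y'.hj
      rcases lt_trichotomy (f n) (f' n) with hlt | heq | hgt
      · have a := y'.hi (n - 1 - f n) (by omega) (by omega)
        have b := y.fx
        rw [e] at b
        omega
      · exact heq
      · have a := y.hi (n - 1 - f' n) (by omega) (by omega)
        have b := y'.fx
        rw [← e] at b
        omega
    rw [← toF_toG h, ← toF_toG h', ← ej, e, ej]
  · rintro g ⟨⟨hg, h1, h2⟩, x, hx, hgx, hc⟩
    have y := (YA_iff hx).2 ⟨hg, hgx, hc⟩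
    have X := toF_XA y
    have e := toG_toF y
    have h3 := toG_occ X
    have h4 := toG_fx X
    rw [e] at h3 h4
    refine ⟨toF n (n-1-x) g, ?_, ?_⟩
    · refine ⟨⟨X.inv, by omega, by omega⟩, ?_⟩
      rw [X.fn]
      exact (XA_iff.1 X).2.2
    · simp only [X.fn]
      exact e


lemma split3 (n c k : ℕ) : (SN (n+1) c k).ncard =
    {f ∈ SN (n+1) c k | f n = n}.ncard +
    {f ∈ SN (n+1) c k | f n < n ∧ Cut (n+1) (f n + 1) f}.ncard +
    {f ∈ SN (n+1) c k | f n < n ∧ ¬ Cut (n+1) (f n + 1) f}.ncard := by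
  have hfin := SN_finite (n+1) c k
  have f1 : {f ∈ SN (n+1) c k | f n = n}.Finite := hfin.subset (fun _ h => h.1)
  have f2 : {f ∈ SN (n+1) c k | f n < n ∧ Cut (n+1) (f n + 1) f}.Finite :=
    hfin.subset (fun _ h => h.1)
  have f3 : {f ∈ SN (n+1) c k | f n < n ∧ ¬ Cut (n+1) (f n + 1) f}.Finite :=
    hfin.subset (fun _ h => h.1)
  rw [← Set.ncard_union_eq ?_ f1 f2, ← Set.ncard_union_eq ?_ (f1.union f2) f3]
  · congr 1
    ext f
    simp only [Set.mem_union, Set.mem_ofPred_eq]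
    constructor
    · intro h
      have := h.1.lt (show n < n + 1 by omega)
      by_cases h1 : f n = n
      · exact Or.inl (Or.inl ⟨h, h1⟩)
      · have h2 : f n < n := by omega
        by_cases h3 : Cut (n+1) (f n + 1) f
        · exact Or.inl (Or.inr ⟨h, h2, h3⟩)
        · exact Or.inr ⟨h, h2, h3⟩
    · rintro ((h | h) | h) <;> exact h.1
  · rw [Set.disjoint_left]
    rintro f (⟨_, h⟩ | ⟨_, h, h'⟩) ⟨_, h2, h3⟩
    · omega
    · exact h3 h'
  · rw [Set.disjoint_left]
    rintro f ⟨_, h⟩ ⟨_, h2, h3⟩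
    omega

lemma exists_last {n g} (h : 1 ≤ fxN n g) :
    ∃ x, x < n ∧ g x = x ∧ ∀ y, x < y → y < n → g y ≠ y := by
  have hne : ((Finset.range n).filter (fun x => g x = x)).Nonempty := Finset.card_pos.1 h
  obtain ⟨x, hx, hm⟩ := Finset.exists_max_image _ id hne
  simp only [Finset.mem_filter, Finset.mem_range, id] at hx hm
  refine ⟨x, hx.1, hx.2, fun y hy hyn e => ?_⟩
  have := hm y ⟨hyn, e⟩
  omega

lemma cut_of_last {n g x} (hg : NInv n g) (hx : x < n) (hgx : g x = x)
    (hl : ∀ y, x < y → y < n → g y ≠ y)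
    (h1 : ∀ q r, r < n → ¬ Oc g x q r) (h2 : ∀ p r, r < n → ¬ Oc g p x r) :
    Cut n (x+1) g := by
  have key : ∀ q, x < q → q < n → g q < x := by
    intro q hq hqn
    by_contra hc
    have a := hl q hq hqn
    have b := hg.lt hqn
    have c : g q ≠ x := by
      intro e
      have := hg.inj (e.trans hgx.symm)
      omega
    rcases Nat.lt_or_gt_of_ne a with d | d
    · exact h1 (g q) q hqn ⟨by omega, d, by rw [hgx]; omega, by rw [hg.1]; omega⟩
    · exact h1 q (g q) b ⟨hq, d, by rw [hgx, hg.1]; omega, by rw [hg.1]; omega⟩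
  intro p q hp hq hqn
  have a := key q hq hqn
  by_contra hc
  have hne : g p ≠ g q := by
    intro e
    have := hg.inj e
    omega
  have hpx : p ≠ x := by
    rintro rfl
    omega
  exact h2 p q hqn ⟨by omega, hq, by omega, by omega⟩

lemma Yfull_zero (n k : ℕ) :
    {g ∈ SN n 0 (k+1) | ∃ x, x < n ∧ g x = x ∧ Cut n (x+1) g} = SN n 0 (k+1) := by
  ext g
  refine ⟨fun h => h.1, fun h => ⟨h, ?_⟩⟩
  obtain ⟨x, hx, hgx, hl⟩ := exists_last (n := n) (g := g) (by rw [h.2.2]; omega)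
  have h0 := occN_zero.1 h.2.1
  exact ⟨x, hx, hgx, cut_of_last h.1 hx hgx hl (fun q r => h0 x q r) (fun p r => h0 p x r)⟩

lemma Zempty_zero (n k : ℕ) :
    {f ∈ SN (n+1) 0 k | f n < n ∧ ¬ Cut (n+1) (f n + 1) f} = ∅ := by
  ext f
  simp only [Set.mem_ofPred_eq, Set.mem_empty_iff_false, iff_false]
  rintro ⟨⟨h, h1, -⟩, h2, h3⟩
  apply h3
  have h0 := occN_zero.1 h1
  intro p q hp hq hqn
  have e : f (f n) = n := h.1 n
  have b := h.lt hqn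
  have b1 : f q ≠ n := by
    intro e'
    have := h.inj (e'.trans e.symm)
    omega
  by_cases hpj : p = f n
  · rw [hpj, e]; omega
  · by_contra hc
    have b2 : f q ≠ f p := fun e' => by
      have := h.inj e'
      omega
    exact h0 p (f n) q hqn ⟨by omega, by omega, by omega, by rw [e]; omega⟩

lemma A_zero (n : ℕ) : (SN (n+1) 0 0).ncard = (SN n 0 1).ncard := by
  rw [split3, SN_fix_zero, XY_card, Zempty_zero, Yfull_zero]
  simp

lemma A_succ (n k : ℕ) : (SN (n+1) 0 (k+1)).ncard = (SN n 0 k).ncard + (SN n 0 (k+2)).ncard := by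
  rw [split3, SN_fix_succ, XY_card, Zempty_zero, Yfull_zero]
  simp

lemma A_base (k : ℕ) : (SN 0 0 k).ncard = if k = 0 then 1 else 0 := by
  split_ifs with hk
  · subst hk
    rw [Set.ncard_eq_one]
    refine ⟨id, ?_⟩
    ext f
    simp only [Set.mem_singleton_iff]
    constructor
    · intro h
      funext x
      exact h.1.2 x (by omega)
    · rintro rfl
      refine ⟨⟨fun _ => rfl, fun _ _ => rfl⟩, ?_, by simp [fxN]⟩
      rw [occN_zero]
      intro p q r hr
      omega
  · rw [Set.ncard_eq_zero (SN_finite _ _ _)]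
    ext f
    simp only [Set.mem_empty_iff_false, iff_false]
    rintro ⟨-, -, h⟩
    simp [fxN] at h
    omega

/-- shape of the unique occurrence -/
lemma once_shape {n f} (h : NInv n f) (ho : occN n f = 1) : ∃ a b c, a < b ∧ b < c ∧ c < n ∧
    f a = a ∧ f b = c ∧ f c = b ∧
    ∀ p q r, r < n → Oc f p q r → p = a ∧ q = b ∧ r = c := by
  obtain ⟨a, b, c, hc, ⟨h1, h2, h3, h4⟩, hu⟩ := occN_one.1 ho
  have := hu (f a) (f c) (f b) (h.lt (by omega))
    ⟨h3, h4, by rw [h.1, h.1]; omega, by rw [h.1, h.1]; omega⟩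
  exact ⟨a, b, c, h1, h2, hc, this.1, this.2.2, this.2.1, hu⟩

lemma E_zero (n : ℕ) : (SN n 1 0).ncard = 0 := by
  rw [Set.ncard_eq_zero (SN_finite _ _ _)]
  ext f
  simp only [Set.mem_empty_iff_false, iff_false]
  rintro ⟨h, ho, hf⟩
  obtain ⟨a, b, c, h1, h2, h3, fa, -⟩ := once_shape h ho
  unfold fxN at hf
  rw [Finset.card_eq_zero] at hf
  have : a ∈ (Finset.range n).filter (fun x => f x = x) := by
    simp only [Finset.mem_filter, Finset.mem_range]
    exact ⟨by omega, fa⟩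
  rw [hf] at this
  simp at this

lemma Yfull_one (n k : ℕ) :
    {g ∈ SN n 1 (k+2) | ∃ x, x < n ∧ g x = x ∧ Cut n (x+1) g} = SN n 1 (k+2) := by
  ext g
  refine ⟨fun h => h.1, fun h => ⟨h, ?_⟩⟩
  obtain ⟨x, hx, hgx, hl⟩ := exists_last (n := n) (g := g) (by rw [h.2.2]; omega)
  obtain ⟨a, b, c, h1, h2, h3, fa, fb, fc, hu⟩ := once_shape h.1 h.2.1
  have hax : a ≠ x := by
    rintro rfl
    have h4 : 1 < fxN n g := by rw [h.2.2]; omega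
    obtain ⟨y, hy, hya⟩ := Finset.exists_mem_ne h4 a
    simp only [Finset.mem_filter, Finset.mem_range] at hy
    have : ¬ a < y := fun h' => hl y h' hy.1 hy.2
    have := hu y b c h3 ⟨by omega, h2, by omega, by omega⟩
    omega
  have hxb : b ≠ x := by rintro rfl; omega
  refine ⟨x, hx, hgx, cut_of_last h.1 hx hgx hl ?_ ?_⟩
  · intro q r hr ho
    have := hu _ _ _ hr ho
    omega
  · intro q r hr ho
    have := hu _ _ _ hr ho
    omega

structure ZA (t : ℕ) (f : ℕ → ℕ) : Prop where
  inv : NInv (2*t+3) f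
  ft : f t = t
  ft1 : f (t+1) = 2*t+2
  ft2 : f (2*t+2) = t+1
  lo : ∀ p, p < t → t + 2 ≤ f p ∧ f p < 2*t+2
  hi : ∀ p, t + 2 ≤ p → p < 2*t+2 → f p < t

lemma Z_shape {n k f} (hf : f ∈ SN (n+1) 1 k) (hn : f n < n) (hc : ¬ Cut (n+1) (f n + 1) f) :
    ∃ t, n = 2*t+2 ∧ ZA t f := by
  obtain ⟨h, ho, -⟩ := hf
  obtain ⟨a, b, c, h1, h2, h3, fa, fb, fc, hu⟩ := once_shape h ho
  have e : f (f n) = n := h.1 n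
  have hb : f n = b ∧ c = n := by
    unfold Cut at hc
    push Not at hc
    obtain ⟨p, q, hp, hq, hqn, hle⟩ := hc
    have b := h.lt hqn
    have b1 : f q ≠ n := by
      intro e'
      have := h.inj (e'.trans e.symm)
      omega
    have hpj : p ≠ f n := by
      rintro rfl
      rw [e] at hle; omega
    have b2 : f q ≠ f p := fun e' => by
      have := h.inj e'
      omega
    have h5 := hu p (f n) q hqn ⟨by omega, by omega, by omega, by rw [e]; omega⟩
    rw [h5.2.1, fb] at e
    exact ⟨h5.2.1, e⟩
  obtain ⟨hb, rfl⟩ := hb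
  have ne : ∀ x y, x ≠ y → f x ≠ f y := fun x y hxy e' => hxy (h.inj e')
  -- values between b and c are below a
  have r1 : ∀ q, b < q → q < c → f q < a := by
    intro q hq hqn
    by_contra hcon
    have n1 := ne q a (by omega)
    have n2 := ne q b (by omega)
    have := h.lt (show q < c + 1 by omega)
    have := hu a b q (by omega) ⟨h1, hq, by omega, by omega⟩
    omega
  have r2 : ∀ p, p < b → p ≠ a → b < f p ∧ f p < c := by
    intro p hp hpa
    have n1 := ne p c (by omega)
    have n2 := ne p b (by omega)
    have := h.lt (show p < c + 1 by omega)
    refine ⟨?_, by omega⟩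
    by_contra hcon
    have := hu p b c (by omega) ⟨hp, h2, by omega, by omega⟩
    omega
  have r3 : b = a + 1 := by
    by_contra hcon
    have := r2 (a+1) (by omega) (by omega)
    have h5 := r1 _ this.1 this.2
    rw [h.1] at h5
    omega
  have c1 := Finset.card_le_card_of_injOn (s := Finset.Ioo b c) (t := Finset.range a) f
    (by intro q hq; simp at hq ⊢; exact r1 q hq.1 hq.2) h.inj.injOn
  have c2 := Finset.card_le_card_of_injOn (s := Finset.range a) (t := Finset.Ioo b c) f
    (by intro q hq; simp at hq ⊢; exact r2 q (by omega) (by omega)) h.inj.injOn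
  simp at c1 c2
  have hcn : c = 2*a+2 := by omega
  subst hcn
  subst r3
  refine ⟨a, rfl, h, fa, fb, fc, ?_, ?_⟩
  · intro p hp
    have := r2 p (by omega) (by omega)
    omega
  · intro p hp hp2
    exact r1 p (by omega) hp2

lemma ZA_bad {t f} (h : ZA t f) : f (2*t+2) < 2*t+2 ∧ ¬ Cut (2*t+2+1) (f (2*t+2) + 1) f := by
  rw [h.ft2]
  refine ⟨by omega, fun hc => ?_⟩
  have := hc t (2*t+2) (by omega) (by omega) (by omega)
  rw [h.ft, h.ft2] at this
  omega

lemma ZA_fx {t f} (h : ZA t f) : fxN (2*t+3) f = 1 := by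
  unfold fxN
  rw [Finset.card_eq_one]
  refine ⟨t, ?_⟩
  ext y
  simp only [Finset.mem_filter, Finset.mem_range, Finset.mem_singleton]
  constructor
  · rintro ⟨hy, e⟩
    by_contra hne
    by_cases h1 : y < t
    · have := h.lo y h1; omega
    by_cases h2 : y = t + 1
    · have := h.ft1; rw [← h2] at this; omega
    by_cases h3 : y = 2 * t + 2
    · have := h.ft2; rw [← h3] at this; omega
    · have := h.hi y (by omega) (by omega); omega
  · rintro rfl
    exact ⟨by omega, h.ft⟩

structure WA (t : ℕ) (g : ℕ → ℕ) : Prop where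
  inv : NInv (2*t) g
  lo : ∀ p, p < t → t ≤ g p ∧ g p < 2*t
  hi : ∀ p, t ≤ p → p < 2*t → g p < t

lemma W_shape {t g} (hg : g ∈ SN (2*t) 0 0) : WA t g := by
  obtain ⟨h, ho, hf⟩ := hg
  have h0 := occN_zero.1 ho
  have nf : ∀ y, y < 2 * t → g y ≠ y := by
    intro y hy e
    unfold fxN at hf
    rw [Finset.card_eq_zero] at hf
    have : y ∈ (Finset.range (2*t)).filter (fun x => g x = x) := by
      simp only [Finset.mem_filter, Finset.mem_range]
      exact ⟨hy, e⟩
    rw [hf] at this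
    simp at this
  -- no pair p < g p < q < g q
  have np : ∀ p q, p < g p → g p < q → q < g q → g q < 2 * t → False := by
    intro p q h1 h2 h3 h4
    exact h0 p q (g q) h4 ⟨by omega, h3, by rw [h.1]; omega, by rw [h.1]; omega⟩
  have np' : ∀ p q, p < t → g p < t → t ≤ q → q < 2*t → t ≤ g q → False := by
    intro p q hp hgp hq hq2 hgq
    have a1 := nf p (by omega)
    have a2 := nf q hq2
    have a3 := h.lt hq2
    rcases Nat.lt_or_gt_of_ne a1 with d | d <;> rcases Nat.lt_or_gt_of_ne a2 with d' | d'
    · exact np (g p) (g q) (by rw [h.1]; omega) (by rw [h.1]; omega) (by rw [h.1]; omega) (by rw [h.1]; omega)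
    · exact np (g p) q (by rw [h.1]; omega) (by rw [h.1]; omega) d' a3
    · exact np p (g q) (by omega) (by omega) (by rw [h.1]; omega) (by rw [h.1]; omega)
    · exact np p q d (by omega) d' a3
  have hlo : ∀ p, p < t → t ≤ g p := by
    intro p hp
    by_contra hc
    have all : ∀ q, t ≤ q → q < 2 * t → g q < t := by
      intro q hq hq2
      by_contra hc2
      exact np' p q hp (by omega) hq hq2 (by omega)
    have := Finset.card_le_card_of_injOn (s := Finset.Ico t (2*t)) (t := (Finset.range t).erase p) g
      (by
        intro q hq
        simp at hq ⊢
        refine ⟨all q hq.1 hq.2, ?_⟩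
        intro e
        have : g p = q := by rw [← e, h.1]
        omega) h.inj.injOn
    rw [Finset.card_erase_of_mem (by simpa using hp)] at this
    simp at this
    omega
  have hhi : ∀ q, t ≤ q → q < 2 * t → g q < t := by
    intro q hq hq2
    by_contra hc
    have := Finset.card_le_card_of_injOn (s := Finset.range t) (t := (Finset.Ico t (2*t)).erase q) g
      (by
        intro p hp
        simp at hp ⊢
        refine ⟨⟨hlo p hp, h.lt (by omega)⟩, ?_⟩
        intro e
        have : g q = p := by rw [← e, h.1]
        omega) h.inj.injOn
    rw [Finset.card_erase_of_mem (by simp; omega)] at this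
    simp at this
    omega
  exact ⟨h, fun p hp => ⟨hlo p hp, h.lt (by omega)⟩, hhi⟩

def zG (t : ℕ) (f : ℕ → ℕ) (y : ℕ) : ℕ :=
  if y < t then f y - 2 else if y < 2*t then f (y+2) else y
def zF (t : ℕ) (g : ℕ → ℕ) (y : ℕ) : ℕ :=
  if y < t then g y + 2 else if y = t then t else if y = t+1 then 2*t+2
  else if y < 2*t+2 then g (y-2) else if y = 2*t+2 then t+1 else y

lemma zF_ZA {t g} (h : WA t g) : ZA t (zF t g) := by
  obtain ⟨inv, lo, hi⟩ := h
  have hlo : ∀ y, y < t → zF t g y = g y + 2 := by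
    intro y hy; unfold zF; rw [if_pos hy]
  have hhi : ∀ y, t + 2 ≤ y → y < 2*t+2 → zF t g y = g (y-2) := by
    intro y hy hy2; unfold zF
    rw [if_neg (by omega), if_neg (by omega), if_neg (by omega), if_pos hy2]
  have e1 : zF t g t = t := by simp [zF]
  have e2 : zF t g (t+1) = 2*t+2 := by simp [zF]
  have e3 : zF t g (2*t+2) = t+1 := by
    unfold zF
    rw [if_neg (by omega), if_neg (by omega), if_neg (by omega), if_neg (by omega), if_pos rfl]
  have big : ∀ y, 2*t+3 ≤ y → zF t g y = y := by
    intro y hy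
    unfold zF
    rw [if_neg (by omega), if_neg (by omega), if_neg (by omega), if_neg (by omega), if_neg (by omega)]
  refine ⟨⟨?_, big⟩, e1, e2, e3, ?_, ?_⟩
  · intro y
    by_cases h1 : y < t
    · have := lo y h1
      rw [hlo y h1, hhi _ (by omega) (by omega), Nat.add_sub_cancel, inv.1]
    by_cases h2 : y = t
    · rw [h2, e1, e1]
    by_cases h3 : y = t + 1
    · rw [h3, e2, e3]
    by_cases h4 : y < 2*t+2
    · have := hi (y-2) (by omega) (by omega)
      rw [hhi y (by omega) h4, hlo _ this, inv.1]
      omega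
    by_cases h5 : y = 2*t+2
    · rw [h5, e3, e2]
    · rw [big y (by omega), big y (by omega)]
  · intro p hp
    have := lo p hp
    rw [hlo p hp]; omega
  · intro p hp hp2
    rw [hhi p hp hp2]
    exact hi _ (by omega) (by omega)

lemma zG_WA {t f} (h : ZA t f) : WA t (zG t f) := by
  obtain ⟨inv, e1, e2, e3, lo, hi⟩ := h
  have hlo : ∀ y, y < t → zG t f y = f y - 2 := by
    intro y hy; unfold zG; rw [if_pos hy]
  have hhi : ∀ y, t ≤ y → y < 2*t → zG t f y = f (y+2) := by
    intro y hy hy2; unfold zG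
    rw [if_neg (by omega), if_pos hy2]
  have big : ∀ y, 2*t ≤ y → zG t f y = y := by
    intro y hy
    unfold zG
    rw [if_neg (by omega), if_neg (by omega)]
  refine ⟨⟨?_, big⟩, ?_, ?_⟩
  · intro y
    by_cases h1 : y < t
    · have := lo y h1
      rw [hlo y h1, hhi _ (by omega) (by omega), Nat.sub_add_cancel (by omega), inv.1]
    by_cases h4 : y < 2*t
    · have := hi (y+2) (by omega) (by omega)
      rw [hhi y (by omega) h4, hlo _ this, inv.1]
      omega
    · rw [big y (by omega), big y (by omega)]
  · intro p hp
    have := lo p hp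
    rw [hlo p hp]; omega
  · intro p hp hp2
    rw [hhi p hp hp2]
    exact hi _ (by omega) (by omega)

lemma zF_zG {t f} (h : ZA t f) : zF t (zG t f) = f := by
  funext y
  unfold zF
  split_ifs with h1 h2 h3 h4 h5
  · have := h.lo y h1
    unfold zG; rw [if_pos h1]; omega
  · rw [h2, h.ft]
  · rw [h3, h.ft1]
  · unfold zG
    rw [if_neg (by omega), if_pos (by omega), Nat.sub_add_cancel (by omega)]
  · rw [h5, h.ft2]
  · rw [h.inv.2 y (by omega)]

lemma zG_zF {t g} (h : WA t g) : zG t (zF t g) = g := by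
  funext y
  unfold zG
  split_ifs with h1 h2
  · unfold zF; rw [if_pos h1]; omega
  · unfold zF
    rw [if_neg (by omega), if_neg (by omega), if_neg (by omega), if_pos (by omega), Nat.add_sub_cancel]
  · rw [h.inv.2 y (by omega)]

lemma WA_fx {t g} (h : WA t g) : fxN (2*t) g = 0 := by
  unfold fxN
  rw [Finset.card_eq_zero, Finset.filter_eq_empty_iff]
  intro y hy e
  simp at hy
  by_cases h1 : y < t
  · have := h.lo y h1; omega
  · have := h.hi y (by omega) hy; omega

lemma WA_blocks {t g} (h : WA t g) {p q r} (hr : r < 2*t) (ho : Oc g p q r) :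
    r < t ∨ t ≤ p := by
  obtain ⟨h1, h2, h3, h4⟩ := ho
  by_contra hc
  push Not at hc
  have a := h.lo p hc.2
  have b := h.hi r hc.1 hr
  omega

lemma Z_occ {t f} (h : ZA t f) : occN (2*t+3) f = 1 ↔ occN (2*t) (zG t f) = 0 := by
  have hW := zG_WA h
  have hlo : ∀ y, y < t → zG t f y + 2 = f y := by
    intro y hy
    have := h.lo y hy
    unfold zG; rw [if_pos hy]; omega
  have hhi : ∀ y, t ≤ y → y < 2*t → zG t f y = f (y+2) := by
    intro y hy hy2; unfold zG
    rw [if_neg (by omega), if_pos hy2]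
  obtain ⟨inv, e1, e2, e3, lo, hi⟩ := h
  have hocc : Oc f t (t+1) (2*t+2) := ⟨by omega, by omega, by omega, by omega⟩
  constructor
  · intro ho
    obtain ⟨a, b, c, hc, -, hu⟩ := occN_one.1 ho
    have hm := hu _ _ _ (by omega) hocc
    rw [occN_zero]
    intro p q r hr hoc
    rcases WA_blocks hW hr hoc with hb | hb
    · obtain ⟨h1, h2, h3, h4⟩ := hoc
      have a1 := hlo p (by omega)
      have a2 := hlo q (by omega)
      have a3 := hlo r (by omega)
      have := hu p q r (by omega) ⟨h1, h2, by omega, by omega⟩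
      omega
    · obtain ⟨h1, h2, h3, h4⟩ := hoc
      have a1 := hhi p (by omega) (by omega)
      have a2 := hhi q (by omega) (by omega)
      have a3 := hhi r (by omega) (by omega)
      have := hu (p+2) (q+2) (r+2) (by omega) ⟨by omega, by omega, by omega, by omega⟩
      omega
  · intro ho
    have h0 := occN_zero.1 ho
    rw [occN_one]
    refine ⟨t, t+1, 2*t+2, by omega, hocc, ?_⟩
    rintro p q r hr ⟨h1, h2, h3, h4⟩
    have bq := inv.lt (show q < 2*t+3 by omega)
    have rne : r ≠ t + 1 := by rintro rfl; omega
    rcases Nat.lt_trichotomy p t with hp | hp | hp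
    · have l := lo p hp
      have hrt : r < t := by
        by_contra hcon
        by_cases r1 : r = t
        · rw [r1] at h3; omega
        by_cases r2 : r = 2*t+2
        · rw [r2] at h3; omega
        · have := hi r (by omega) (by omega)
          omega
      have a1 := hlo p (by omega)
      have a2 := hlo q (by omega)
      have a3 := hlo r (by omega)
      exact absurd ⟨h1, h2, by omega, by omega⟩ (h0 p q r (by omega))
    · subst hp
      have hr2 : r = 2*p+2 := by
        by_contra hcon
        have := hi r (by omega) (by omega)
        omega
      refine ⟨rfl, ?_, hr2⟩
      by_contra hcon
      have := hi q (by omega) (by omega)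
      omega
    · exfalso
      have hp1 : p ≠ t + 1 := by
        rintro rfl
        have := inv.lt hr
        omega
      have hq := hi q (by omega) (by omega)
      have hr2 : r ≠ 2*t+2 := by
        rintro rfl
        omega
      have a1 := hhi (p-2) (by omega) (by omega)
      have a2 := hhi (q-2) (by omega) (by omega)
      have a3 := hhi (r-2) (by omega) (by omega)
      rw [Nat.sub_add_cancel (by omega)] at a1 a2 a3
      exact h0 (p-2) (q-2) (r-2) (by omega) ⟨by omega, by omega, by omega, by omega⟩

lemma Z_card_ne (n k : ℕ) (hk : k ≠ 1) :
    {f ∈ SN (n+1) 1 k | f n < n ∧ ¬ Cut (n+1) (f n + 1) f}.ncard = 0 := by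
  rw [Set.ncard_eq_zero ((SN_finite _ _ _).subset (fun _ h => h.1))]
  ext f
  simp only [Set.mem_ofPred_eq, Set.mem_empty_iff_false, iff_false]
  rintro ⟨h, h2, h3⟩
  obtain ⟨t, rfl, hz⟩ := Z_shape h h2 h3
  have := ZA_fx hz
  have h4 := h.2.2
  exact hk (h4.symm.trans this)

lemma A_closed (m k : ℕ) : (Odd (m+k) → (SN m 0 k).ncard = 0) ∧
      (∀ s, m + k = 2 * s → (m+1) * (SN m 0 k).ncard = (k+1) * (m+1).choose (s+1)) :=
  closed (fun m k => (SN m 0 k).ncard) (by simp [A_base]) (by simp [A_base]) A_zero A_succ m k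

lemma Z_card (m : ℕ) :
    {f ∈ SN (m+3) 1 1 | f (m+2) < m+2 ∧ ¬ Cut (m+2+1) (f (m+2) + 1) f}.ncard
      = (SN m 0 0).ncard := by
  rcases Nat.even_or_odd m with hm | hm
  · obtain ⟨t, ht⟩ := hm
    have : m = 2 * t := by omega
    subst this
    have hZ : ∀ f, f ∈ {f ∈ SN (2*t+3) 1 1 |
        f (2*t+2) < 2*t+2 ∧ ¬ Cut (2*t+2+1) (f (2*t+2) + 1) f} → ZA t f := by
      rintro f ⟨h, h2, h3⟩
      obtain ⟨t', e, hz⟩ := Z_shape h h2 h3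
      have : t = t' := by omega
      rwa [this]
    refine Set.ncard_congr (fun f _ => zG t f) ?_ ?_ ?_
    · intro f hf
      have hz := hZ f hf
      exact ⟨(zG_WA hz).inv, (Z_occ hz).1 hf.1.2.1, WA_fx (zG_WA hz)⟩
    · intro f f' hf hf' e
      rw [← zF_zG (hZ f hf), ← zF_zG (hZ f' hf')]
      exact congrArg (zF t) e
    · intro g hg
      have hw := W_shape hg
      have hz := zF_ZA hw
      refine ⟨zF t g, ⟨⟨hz.inv, ?_, ZA_fx hz⟩, ZA_bad hz⟩, zG_zF hw⟩
      rw [Z_occ hz, zG_zF hw]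
      exact hg.2.1
  · rw [(A_closed m 0).1 (by simpa using hm),
      Set.ncard_eq_zero ((SN_finite _ _ _).subset (fun _ h => h.1))]
    ext f
    simp only [Set.mem_ofPred_eq, Set.mem_empty_iff_false, iff_false]
    rintro ⟨h, h2, h3⟩
    obtain ⟨t, e, hz⟩ := Z_shape h h2 h3
    rw [Nat.odd_iff] at hm
    omega

lemma E_eq (m : ℕ) : ∀ k, (SN (m+2) 1 (k+1)).ncard = (SN m 0 (k+1)).ncard := by
  induction m with
  | zero =>
    intro k
    rw [A_base, if_neg (by omega), Set.ncard_eq_zero (SN_finite _ _ _)]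
    ext f
    simp only [Set.mem_empty_iff_false, iff_false]
    rintro ⟨h, h1, -⟩
    obtain ⟨a, b, c, h1, h2, h3, -⟩ := once_shape h h1
    omega
  | succ m ih =>
    intro k
    rw [A_succ, show m + 1 + 2 = (m + 2) + 1 by ring, split3, SN_fix_succ, XY_card,
      show k + 1 + 1 = k + 2 from rfl, Yfull_one, show (SN (m+2) 1 (k+2)).ncard =
        (SN m 0 (k+2)).ncard from ih (k+1)]
    rcases k with _ | k
    · rw [E_zero, Z_card]
      simp only [Nat.zero_add]
      omega
    · rw [ih k, Z_card_ne _ _ (by omega)]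
      omega

def extN {n : ℕ} (π : Equiv.Perm (Fin n)) (x : ℕ) : ℕ := if h : x < n then (π ⟨x, h⟩).val else x

lemma extN_val {n : ℕ} (π : Equiv.Perm (Fin n)) (i : Fin n) : extN π i.val = (π i).val := by
  simp [extN]

lemma extN_inv {n : ℕ} {π : Equiv.Perm (Fin n)} (h : IsInvolution π) : NInv n (extN π) := by
  constructor
  · intro x
    by_cases hx : x < n
    · have h1 := extN_val π ⟨x, hx⟩
      simp only at h1
      rw [h1, extN_val, h]
    · have : extN π x = x := by simp [extN, hx]
      rw [this, this]
  · intro x hx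
    simp [extN, Nat.not_lt.2 hx]

lemma extN_occ {n : ℕ} (π : Equiv.Perm (Fin n)) : occ132 π = occN n (extN π) := by
  unfold occ132 occN
  rw [← Nat.card_coe_set_eq]
  refine Nat.card_congr (Equiv.ofBijective
    (fun t => ⟨(t.1.1.val, t.1.2.1.val, t.1.2.2.val), ?_⟩) ⟨?_, ?_⟩)
  · obtain ⟨⟨p, q, r⟩, h1, h2, h3, h4⟩ := t
    refine ⟨r.isLt, h1, h2, ?_, ?_⟩
    · simp only [extN_val]; exact h3
    · simp only [extN_val]; exact h4
  · rintro ⟨⟨p, q, r⟩, h⟩ ⟨⟨p', q', r'⟩, h'⟩ e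
    simp only [Subtype.mk.injEq, Prod.mk.injEq, Fin.val_inj] at e
    obtain ⟨rfl, rfl, rfl⟩ := e
    rfl
  · rintro ⟨⟨p, q, r⟩, hr, h1, h2, h3, h4⟩
    simp only at hr h1 h2 h3 h4
    have e1 := extN_val π ⟨p, by omega⟩
    have e2 := extN_val π ⟨q, by omega⟩
    have e3 := extN_val π ⟨r, by omega⟩
    simp only at e1 e2 e3
    rw [e1, e3] at h3
    rw [e2, e3] at h4
    exact ⟨⟨(⟨p, by omega⟩, ⟨q, by omega⟩, ⟨r, by omega⟩), h1, h2, h3, h4⟩, rfl⟩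

lemma extN_fx {n : ℕ} (π : Equiv.Perm (Fin n)) : fixedPts π = fxN n (extN π) := by
  unfold fixedPts fxN
  refine Finset.card_bij (fun i _ => i.val) ?_ ?_ ?_
  · intro i hi
    simp only [Finset.mem_filter, Finset.mem_univ, true_and] at hi
    simp only [Finset.mem_filter, Finset.mem_range, extN_val, hi]
    exact ⟨i.isLt, trivial⟩
  · intro i _ j _ e
    exact Fin.ext e
  · intro x hx
    simp only [Finset.mem_filter, Finset.mem_range] at hx
    refine ⟨⟨x, hx.1⟩, ?_, rfl⟩
    simp only [Finset.mem_filter, Finset.mem_univ, true_and]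
    apply Fin.ext
    rw [← extN_val]
    exact hx.2

lemma iCount_eq (n k : ℕ) : iCountOnce132 n k = (SN n 1 k).ncard := by
  unfold iCountOnce132
  rw [← Nat.card_coe_set_eq]
  refine Nat.card_congr (Equiv.ofBijective
    (fun π => ⟨extN π.1, extN_inv π.2.1, ?_, ?_⟩) ⟨?_, ?_⟩)
  · rw [← extN_occ]; exact π.2.2.1
  · rw [← extN_fx]; exact π.2.2.2
  · rintro ⟨π, h⟩ ⟨π', h'⟩ e
    have e2 : extN π = extN π' := congrArg Subtype.val e
    rw [Subtype.mk.injEq]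
    ext i
    rw [← extN_val, ← extN_val, e2]
  · rintro ⟨f, hf, h1, h2⟩
    let F : Fin n → Fin n := fun i => ⟨f i.val, hf.lt i.isLt⟩
    have hF : Function.Involutive F := fun i => Fin.ext (hf.1 i.val)
    let π : Equiv.Perm (Fin n) := hF.toPerm
    have e : extN π = f := by
      funext x
      by_cases hx : x < n
      · have := extN_val π ⟨x, hx⟩
        exact this
      · rw [hf.2 x (by omega)]; simp [extN, hx]
    exact ⟨⟨π, fun i => hF i, by rw [extN_occ, e, h1], by rw [extN_fx, e, h2]⟩, Subtype.ext e⟩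

/-- For all `n ≥ 3` and `1 ≤ k ≤ n` with `n + k` even,
`(n-1) · i_n^k(∅;132) = (k+1) · C(n-1, (n+k)/2)`; when `k = 0` or `n + k` is odd,
`i_n^k(∅;132) = 0`. -/
theorem statement12 (n k : ℕ) (hn : 3 ≤ n) (hk : k ≤ n) :
    (1 ≤ k → Even (n + k) →
      (n - 1) * iCountOnce132 n k = (k + 1) * (n - 1).choose ((n + k) / 2)) ∧
    (k = 0 ∨ Odd (n + k) → iCountOnce132 n k = 0) := by
  rw [iCount_eq]
  obtain ⟨m, rfl⟩ : ∃ m, n = m + 2 := ⟨n - 2, by omega⟩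
  rcases k with _ | k
  · exact ⟨by omega, fun _ => E_zero _⟩
  · rw [E_eq]
    refine ⟨fun _ he => ?_, fun ho => ?_⟩
    · obtain ⟨s, hs⟩ := he
      have := (A_closed m (k+1)).2 (s-1) (by omega)
      rw [show (m + 2 + (k+1)) / 2 = s - 1 + 1 by omega]
      exact this
    · refine (A_closed m (k+1)).1 ?_
      rcases ho with h | h
      · omega
      · rw [Nat.odd_iff] at *
        omega
end

section
/- For all integers n ≥ 1 and 0 ≤ k ≤ n, the number of involutions of {1,…,n} with exactly k fixed points containing the pattern 132 exactly once equals the number of involutions of {1,…,n} with exactly k fixed points containing the pattern 213 exactly once: i_n^k(∅;132) = i_n^k(∅;213). -/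
/-- The number of occurrences of the pattern 213 in a permutation of `Fin n`. -/
noncomputable def occ213 {n : ℕ} (π : Equiv.Perm (Fin n)) : ℕ :=
  Nat.card {t : Fin n × Fin n × Fin n //
    t.1 < t.2.1 ∧ t.2.1 < t.2.2 ∧ (π t.2.1 < π t.1 ∧ π t.1 < π t.2.2)}

/-- `i_n^k(∅;213)`: the number of involutions of `{1, …, n}` with exactly `k` fixed
points containing the pattern 213 exactly once. -/
noncomputable def iCountOnce213 (n k : ℕ) : ℕ :=
  Nat.card {π : Equiv.Perm (Fin n) // IsInvolution π ∧ occ213 π = 1 ∧ fixedPts π = k}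

theorem rc_apply {n : ℕ} (π : Equiv.Perm (Fin n)) (i : Fin n) :
    (Fin.revPerm.permCongr π) i = (π i.rev).rev := rfl

theorem rc_fixedPts {n : ℕ} (π : Equiv.Perm (Fin n)) :
    fixedPts (Fin.revPerm.permCongr π) = fixedPts π := by
  unfold fixedPts
  refine Finset.card_equiv Fin.revPerm ?_
  intro i
  rw [Finset.mem_filter, Finset.mem_filter]
  simp only [Finset.mem_univ, true_and, rc_apply, Fin.revPerm_apply]
  exact Fin.rev_eq_iff

theorem rc_invol {n : ℕ} (π : Equiv.Perm (Fin n)) :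
    IsInvolution (Fin.revPerm.permCongr π) ↔ IsInvolution π := by
  unfold IsInvolution
  simp only [rc_apply, Fin.rev_rev]
  constructor
  · intro h i
    have := h i.rev
    simpa using this
  · intro h i
    simp [h]

theorem rc_occ {n : ℕ} (π : Equiv.Perm (Fin n)) :
    occ213 (Fin.revPerm.permCongr π) = occ132 π := by
  unfold occ213 occ132
  let e : Fin n × Fin n × Fin n ≃ Fin n × Fin n × Fin n :=
    { toFun := fun t => (t.2.2.rev, t.2.1.rev, t.1.rev)
      invFun := fun t => (t.2.2.rev, t.2.1.rev, t.1.rev)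
      left_inv := fun t => by simp
      right_inv := fun t => by simp }
  refine Nat.card_congr (e.subtypeEquiv ?_)
  rintro ⟨a, b, c⟩
  simp only [e, Equiv.coe_fn_mk, rc_apply, Fin.rev_lt_rev]
  tauto

/-- For all `n ≥ 1` and `0 ≤ k ≤ n`, `i_n^k(∅;132) = i_n^k(∅;213)`. -/
theorem statement13 (n k : ℕ) (hn : 1 ≤ n) (hk : k ≤ n) :
    iCountOnce132 n k = iCountOnce213 n k := by
  unfold iCountOnce132 iCountOnce213
  refine Nat.card_congr (Fin.revPerm.permCongr.subtypeEquiv ?_)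
  intro π
  rw [rc_invol, rc_occ, rc_fixedPts]
end

section
/- For every integer n ≥ 3, the total number of involutions of {1,2,…,n} that contain the pattern 132 exactly once equals the binomial coefficient C(n-2, ⌊(n-3)/2⌋). -/
/-- `i_n(∅;132)`: the number of involutions of `{1, …, n}` containing the pattern
132 exactly once. -/
noncomputable def iCountOnceTotal132 (n : ℕ) : ℕ :=
  Nat.card {π : Equiv.Perm (Fin n) // IsInvolution π ∧ occ132 π = 1}

namespace S14

def Occ {n : ℕ} (π : Equiv.Perm (Fin n)) (a b c : Fin n) : Prop :=
  a < b ∧ b < c ∧ π a < π c ∧ π c < π b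

def Good {n : ℕ} (π : Equiv.Perm (Fin n)) : Prop :=
  IsInvolution π ∧ ∃ a b c, Occ π a b c ∧
    ∀ a' b' c', Occ π a' b' c' → a' = a ∧ b' = b ∧ c' = c

def Inc {n : ℕ} (p : ℕ) (π : Equiv.Perm (Fin n)) : Prop :=
  ∀ x y : Fin n, p ≤ x.val → x < y → π x < π y

def S (n p : ℕ) : Set (Equiv.Perm (Fin n)) := {π | Good π ∧ Inc p π}

lemma good_iff {n : ℕ} (π : Equiv.Perm (Fin n)) :
    (IsInvolution π ∧ occ132 π = 1) ↔ Good π := by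
  unfold Good
  refine and_congr_right fun _ => ?_
  unfold occ132
  rw [Nat.card_eq_one_iff_exists]
  constructor
  · rintro ⟨⟨⟨a, b, c⟩, h⟩, hu⟩
    refine ⟨a, b, c, h, fun a' b' c' h' => ?_⟩
    have := hu ⟨(a', b', c'), h'⟩
    have h2 := congrArg Subtype.val this
    simpa using h2
  · rintro ⟨a, b, c, h, hu⟩
    refine ⟨⟨(a, b, c), h⟩, ?_⟩
    rintro ⟨⟨a', b', c'⟩, h'⟩
    obtain ⟨rfl, rfl, rfl⟩ := hu a' b' c' h'
    rfl

lemma good_fix {n : ℕ} {π : Equiv.Perm (Fin n)} (h : Good π) :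
    ∃ a b c, Occ π a b c ∧ π a = a ∧ π b = c ∧ π c = b ∧
    ∀ a' b' c', Occ π a' b' c' → a' = a ∧ b' = b ∧ c' = c := by
  obtain ⟨hi, a, b, c, ho, hu⟩ := h
  have := hu (π a) (π c) (π b) ⟨ho.2.2.1, ho.2.2.2, by rw [hi, hi]; exact ho.1, by rw [hi, hi]; exact ho.2.1⟩
  exact ⟨a, b, c, ho, this.1, this.2.2, this.2.1, hu⟩

/-- case first entry fixed -/
lemma zero_fix {n : ℕ} {π : Equiv.Perm (Fin (n+3))} (h : Good π) (h0 : π 0 = 0) :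
    π 1 = 2 ∧ π 2 = 1 ∧ Inc 2 π := by
  obtain ⟨a, b, c, ho, ha, hb, hc, hu⟩ := good_fix h
  have hi := h.1
  have inj := π.injective
  have v0 : ((0 : Fin (n+3)) : ℕ) = 0 := rfl
  have v1 : ((1 : Fin (n+3)) : ℕ) = 1 := rfl
  have v2 : ((2 : Fin (n+3)) : ℕ) = 2 := rfl
  have key : ∀ x y : Fin (n+3), 0 < x.val → x < y → π y < π x → x = b ∧ y = c := by
    intro x y hx hxy hp
    have hy : π y ≠ 0 := by
      intro h; rw [← h0] at h; have := inj h; subst this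
      simp [Fin.lt_def] at hxy
    have hy' : (π y).val ≠ 0 := fun h => hy (Fin.ext h)
    exact (hu 0 x y ⟨by rw [Fin.lt_def]; omega, hxy, by rw [h0, Fin.lt_def]; omega, hp⟩).2
  obtain ⟨o1, o2, o3, o4⟩ := ho
  rw [Fin.lt_def] at o1 o2
  have hb1 : b = 1 := by
    by_contra hne
    have hne' : b.val ≠ 1 := fun h => hne (Fin.ext h)
    rcases lt_trichotomy (π 1) (π c) with h1 | h1 | h1
    · have := (hu 1 b c ⟨by rw [Fin.lt_def]; omega, o2, h1, o4⟩).1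
      have := (hu 0 b c ⟨by rw [Fin.lt_def]; omega, o2, by
        rw [h0, hc, Fin.lt_def]; omega, o4⟩).1
      subst this
      simp_all
    · have := inj h1
      subst this; omega
    · exact hne (key 1 c (by omega) (by rw [Fin.lt_def]; omega) h1).1.symm
  subst hb1
  have hc2 : c = 2 := by
    by_contra hne
    have hne' : c.val ≠ 2 := fun h => hne (Fin.ext h)
    rcases lt_trichotomy (π 2) (π 1) with h1 | h1 | h1
    · exact hne (key 1 2 (by omega) (by rw [Fin.lt_def]; omega) h1).2.symm
    · have := inj h1
      rw [Fin.ext_iff] at this; omega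
    · have := (key 2 c (by omega) (by rw [Fin.lt_def]; omega) (o4.trans h1)).1
      rw [Fin.ext_iff] at this; omega
  subst hc2
  refine ⟨hb, hc, fun x y hx hxy => ?_⟩
  by_contra hlt
  have hne : π y ≠ π x := fun h => by have := inj h; subst this; exact lt_irrefl _ hxy
  have := (key x y (by omega) hxy (lt_of_le_of_ne (not_lt.1 hlt) hne)).1
  rw [Fin.ext_iff] at this; omega

lemma inc_of_ne {n : ℕ} {π : Equiv.Perm (Fin (n+1))} (h : Good π) (h0 : π 0 ≠ 0) :
    Inc (π 0).val π := by
  obtain ⟨a, b, c, ho, ha, hb, hc, hu⟩ := good_fix h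
  have hi := h.1
  intro x y hx hxy
  by_contra hlt
  have hne : π y ≠ π x := fun h => by have := π.injective h; subst this; exact lt_irrefl _ hxy
  have hlt' := lt_of_le_of_ne (not_lt.1 hlt) hne
  have hxq : π 0 ≠ x := by
    rintro rfl; rw [hi] at hlt'; simp [Fin.lt_def] at hlt'
  have hxq' : (π 0).val ≠ x.val := fun h => hxq (Fin.ext h)
  have hy : π y ≠ 0 := by
    intro h; have := hi y; rw [h] at this; rw [this] at hx
    rw [Fin.lt_def] at hxy; omega
  have hy' : (π y).val ≠ 0 := fun h => hy (Fin.ext h)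
  have := (hu 0 (π y) (π x) ⟨by rw [Fin.lt_def, Fin.val_zero]; omega, hlt', by
    rw [hi, Fin.lt_def]; omega, by rw [hi, hi]; exact hxy⟩).1
  subst this; exact h0 ha

lemma le_of_inc {n p : ℕ} {π : Equiv.Perm (Fin (n+1))} (hi : IsInvolution π) (h : Inc p π) :
    (π 0).val ≤ p := by
  by_contra hlt
  push Not at hlt
  have := h ⟨p, by omega⟩ (π 0) le_rfl (by rw [Fin.lt_def]; exact hlt)
  rw [hi] at this
  simp [Fin.lt_def] at this

lemma inc_mono {n p q : ℕ} {π : Equiv.Perm (Fin n)} (hpq : p ≤ q) (h : Inc p π) : Inc q π :=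
  fun x y hx hxy => h x y (hpq.trans hx) hxy

lemma S_split {n p : ℕ} (hp : 2 ≤ p) :
    S (n+3) (p+1) = S (n+3) p ∪ {π | Good π ∧ (π 0).val = p+1} := by
  ext π
  simp only [S, Set.mem_ofPred_eq, Set.mem_union]
  constructor
  · rintro ⟨hg, hI⟩
    by_cases h0 : π 0 = 0
    · exact Or.inl ⟨hg, inc_mono hp (zero_fix hg h0).2.2⟩
    · have := inc_of_ne hg h0
      have h2 := le_of_inc hg.1 hI
      rcases Nat.lt_or_ge p (π 0).val with h3 | h3
      · right; exact ⟨hg, by omega⟩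
      · left; exact ⟨hg, inc_mono h3 this⟩
  · rintro (⟨hg, hI⟩ | ⟨hg, hq⟩)
    · exact ⟨hg, inc_mono (by omega) hI⟩
    · refine ⟨hg, ?_⟩
      rw [← hq]
      apply inc_of_ne hg
      intro h; rw [h] at hq; simp at hq

lemma S_disj {n p : ℕ} :
    Disjoint (S (n+3) p) {π | Good π ∧ (π 0).val = p+1} := by
  rw [Set.disjoint_left]
  rintro π ⟨hg, hI⟩ ⟨_, hq⟩
  have := le_of_inc hg.1 hI
  omega

lemma S_two (n : ℕ) : (S (n+3) 2).ncard = 1 := by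
  rw [Set.ncard_eq_one]
  have v0 : ((0 : Fin (n+3)) : ℕ) = 0 := rfl
  have v1 : ((1 : Fin (n+3)) : ℕ) = 1 := rfl
  have v2 : ((2 : Fin (n+3)) : ℕ) = 2 := rfl
  have hval : ∀ x : Fin (n+3), (Equiv.swap (1 : Fin (n+3)) 2 x).val =
      if x.val = 1 then 2 else if x.val = 2 then 1 else x.val := by
    intro x
    rw [Equiv.swap_apply_def]
    simp only [Fin.ext_iff, v1, v2]
    split_ifs <;> first | rfl | assumption | omega
  refine ⟨Equiv.swap 1 2, ?_⟩
  apply Set.eq_singleton_iff_unique_mem.2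
  constructor
  · refine ⟨⟨fun i => by simp, 0, 1, 2, ?_, ?_⟩, ?_⟩
    · simp only [Occ, Fin.lt_def, hval, v0, v1, v2]; decide
    · intro a b c
      simp only [Occ, Fin.lt_def, hval, Fin.ext_iff, v0, v1, v2]
      split_ifs <;> omega
    · intro x y
      simp only [Fin.lt_def, hval]
      split_ifs <;> omega
  · rintro π ⟨hg, hI⟩
    obtain ⟨a, b, c, ho, ha, hb, hc, hu⟩ := good_fix hg
    have hi := hg.1
    have hb1 : b.val < 2 := by
      by_contra h
      have := hI b c (by omega) ho.2.1
      exact absurd this (not_lt.2 ho.2.2.2.le)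
    have hab := ho.1
    rw [Fin.lt_def] at hab
    have ha0 : a = 0 := by rw [Fin.ext_iff]; omega
    subst ha0
    obtain ⟨h1, h2, -⟩ := zero_fix hg ha
    ext x
    rw [hval]
    split_ifs with c1 c2
    · have : x = 1 := Fin.ext c1
      rw [this, h1]; rfl
    · have : x = 2 := Fin.ext c2
      rw [this, h2]; rfl
    · have hx := hi x
      rcases lt_trichotomy (π x) x with h | h | h
      · by_cases h3 : 2 ≤ (π x).val
        · have := hI _ _ h3 h
          rw [hx] at this
          exact absurd this (not_lt.2 h.le)
        · exfalso
          have : π x = 0 ∨ π x = 1 := by simp only [Fin.ext_iff, v0, v1]; omega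
          rcases this with h4 | h4 <;> rw [h4] at hx
          · rw [ha] at hx; rw [← hx] at h; rw [h4] at *; simp [ha] at h
          · rw [h1] at hx; rw [← hx] at c2; simp at c2
      · rw [h]
      · by_cases h3 : 2 ≤ x.val
        · have := hI _ _ h3 h
          rw [hx] at this
          exact absurd this (not_lt.2 h.le)
        · have : x = 0 := by simp only [Fin.ext_iff, v0]; omega
          rw [this, ha]

/-- skipping `0` and `q+1` -/
def e {m : ℕ} (q : Fin (m+1)) (i : Fin m) : Fin (m+2) := (q.succAbove i).succ

lemma e_val {m : ℕ} (q : Fin (m+1)) (i : Fin m) :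
    (e q i).val = if i.val < q.val then i.val + 1 else i.val + 2 := by
  simp only [e, Fin.succAbove, Fin.val_succ, Fin.lt_def, Fin.val_castSucc]
  split_ifs <;> simp

lemma e_lt {m : ℕ} (q : Fin (m+1)) {i j : Fin m} : e q i < e q j ↔ i < j := by
  rw [Fin.lt_def, Fin.lt_def, e_val, e_val]
  split_ifs <;> omega

lemma e_inj {m : ℕ} (q : Fin (m+1)) {i j : Fin m} : e q i = e q j ↔ i = j := by
  rw [Fin.ext_iff, Fin.ext_iff, e_val, e_val]
  split_ifs <;> omega

lemma e_surj {m : ℕ} (q : Fin (m+1)) (x : Fin (m+2)) (h0 : x ≠ 0) (hq : x ≠ q.succ) :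
    ∃ i, e q i = x := by
  obtain ⟨y, rfl⟩ := Fin.exists_succ_eq.2 h0
  have : y ≠ q := fun h => hq (by rw [h])
  obtain ⟨i, rfl⟩ := Fin.exists_succAbove_eq this
  exact ⟨i, rfl⟩

lemma e_ne_zero {m : ℕ} (q : Fin (m+1)) (i : Fin m) : e q i ≠ 0 := Fin.succ_ne_zero _
lemma e_ne_q {m : ℕ} (q : Fin (m+1)) (i : Fin m) : e q i ≠ q.succ := by
  simp [e, Fin.succAbove_ne]

/-- relation between the large and small involutions -/
def Rel {m : ℕ} (q : Fin (m+1)) (π : Equiv.Perm (Fin (m+2))) (σ : Equiv.Perm (Fin m)) : Prop :=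
  π 0 = q.succ ∧ π q.succ = 0 ∧ ∀ i, π (e q i) = e q (σ i)

lemma cases_e {m : ℕ} (q : Fin (m+1)) (x : Fin (m+2)) :
    x = 0 ∨ x = q.succ ∨ ∃ i, x = e q i := by
  by_cases h0 : x = 0
  · exact Or.inl h0
  by_cases h1 : x = q.succ
  · exact Or.inr (Or.inl h1)
  obtain ⟨i, hi⟩ := e_surj q x h0 h1
  exact Or.inr (Or.inr ⟨i, hi.symm⟩)

lemma exists_small {m : ℕ} (q : Fin (m+1)) (π : Equiv.Perm (Fin (m+2))) (hi : IsInvolution π)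
    (h0 : π 0 = q.succ) : ∃ σ, Rel q π σ := by
  have hq : π q.succ = 0 := by rw [← h0, hi]
  have : ∀ i, ∃ j, e q j = π (e q i) := by
    intro i
    apply e_surj
    · intro h; rw [← hq] at h; exact e_ne_q q i (π.injective h)
    · intro h; rw [← h0] at h; exact e_ne_zero q i (π.injective h)
  choose s hs using this
  have hinv : Function.Involutive s := by
    intro i
    rw [← e_inj q, hs, hs, hi]
  exact ⟨hinv.toPerm, h0, hq, fun i => (hs i).symm⟩

lemma exists_big {m : ℕ} (q : Fin (m+1)) (σ : Equiv.Perm (Fin m)) (hi : IsInvolution σ) :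
    ∃ π, IsInvolution π ∧ Rel q π σ := by
  have : ∀ x : Fin (m+2), ∃ y, (x = 0 → y = q.succ) ∧ (x = q.succ → y = 0) ∧
      ∀ i, x = e q i → y = e q (σ i) := by
    intro x
    rcases cases_e q x with rfl | rfl | ⟨i, rfl⟩
    · exact ⟨q.succ, fun _ => rfl, fun h => absurd h.symm (Fin.succ_ne_zero _),
        fun i h => absurd h.symm (e_ne_zero q i)⟩
    · exact ⟨0, fun h => absurd h (Fin.succ_ne_zero _), fun _ => rfl,
        fun i h => absurd h.symm (e_ne_q q i)⟩
    · refine ⟨e q (σ i), fun h => absurd h (e_ne_zero q i), fun h => absurd h (e_ne_q q i), ?_⟩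
      intro j h
      rw [(e_inj q).1 h]
  choose f f0 fq fe using this
  have hinv : Function.Involutive f := by
    intro x
    rcases cases_e q x with rfl | rfl | ⟨i, rfl⟩
    · exact fq _ (f0 _ rfl)
    · exact f0 _ (fq _ rfl)
    · rw [fe _ _ (fe _ i rfl), hi]
  exact ⟨hinv.toPerm, hinv, f0 _ rfl, fq _ rfl, fun i => fe _ i rfl⟩

lemma rel_occ {m : ℕ} {q : Fin (m+1)} {π σ} (h : Rel q π σ) (a b c : Fin m) :
    Occ π (e q a) (e q b) (e q c) ↔ Occ σ a b c := by
  simp only [Occ, h.2.2, e_lt]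

lemma rel_inv {m : ℕ} {q : Fin (m+1)} {π σ} (h : Rel q π σ) (hi : IsInvolution π) :
    IsInvolution σ := by
  intro i
  rw [← e_inj q, ← h.2.2, ← h.2.2, hi]

lemma rel_fwd {m : ℕ} {q : Fin (m+1)} {π σ} (h : Rel q π σ) (hg : Good π) :
    σ ∈ S m q.val := by
  obtain ⟨a, b, c, ho, ha, hb, hc, hu⟩ := good_fix hg
  have hI := inc_of_ne hg (by rw [h.1]; exact Fin.succ_ne_zero _)
  obtain ⟨h0, hq, he⟩ := id h
  have hq0 : q.succ ≠ 0 := Fin.succ_ne_zero _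
  have hbpos : b ≠ 0 := by rintro rfl; simpa using ho.1
  have hcpos : c ≠ 0 := by rintro rfl; simpa using ho.2.1
  obtain ⟨a', rfl⟩ := e_surj q a (by rintro rfl; exact hq0 (h0.symm.trans ha))
    (by rintro rfl; exact hq0 (ha.symm.trans hq))
  obtain ⟨b', rfl⟩ := e_surj q b hbpos (by rintro rfl; exact hcpos (hb.symm.trans hq))
  obtain ⟨c', rfl⟩ := e_surj q c hcpos (by rintro rfl; exact hbpos (hc.symm.trans hq))
  refine ⟨⟨rel_inv h hg.1, a', b', c', (rel_occ h _ _ _).1 ho, ?_⟩, ?_⟩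
  · intro x y z hx
    have := hu _ _ _ ((rel_occ h _ _ _).2 hx)
    simpa only [e_inj] using this
  · intro x y hx hxy
    have := hI (e q x) (e q y) (by
      rw [h0, e_val, Fin.val_succ]; split_ifs <;> omega) ((e_lt q).2 hxy)
    rwa [he, he, e_lt] at this

lemma rel_bwd {m : ℕ} {q : Fin (m+1)} {π σ} (h : Rel q π σ) (hi : IsInvolution π)
    (hs : σ ∈ S m q.val) : Good π := by
  obtain ⟨⟨hi', a, b, c, ho, hu⟩, hI⟩ := hs
  obtain ⟨h0, hq, he⟩ := id h
  refine ⟨hi, e q a, e q b, e q c, (rel_occ h _ _ _).2 ho, ?_⟩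
  intro x y z hx
  obtain ⟨x1, x2, x3, x4⟩ := id hx
  have hyq : y ≠ q.succ := by rintro rfl; rw [hq] at x4; simp at x4
  have hzq : z ≠ q.succ := by rintro rfl; rw [hq] at x3; simp at x3
  obtain ⟨y, rfl⟩ := e_surj q y (by rintro rfl; simp at x1) hyq
  obtain ⟨z, rfl⟩ := e_surj q z (by rintro rfl; simp at x2) hzq
  rcases cases_e q x with rfl | rfl | ⟨x, rfl⟩
  · exfalso
    rw [he, he, e_lt] at x4
    rw [h0, he, Fin.lt_def, e_val, Fin.val_succ] at x3
    have := hI (σ z) (σ y) (by split_ifs at x3 <;> omega) x4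
    rw [hi', hi'] at this
    rw [e_lt] at x2
    exact absurd this (not_lt.2 x2.le)
  · exfalso
    rw [he, he, e_lt] at x4
    rw [Fin.lt_def, e_val, Fin.val_succ] at x1
    rw [e_lt] at x2
    have := hI y z (by split_ifs at x1 <;> omega) x2
    exact absurd this (not_lt.2 x4.le)
  · simp only [e_inj]
    exact hu _ _ _ ((rel_occ h _ _ _).1 hx)

lemma rel_uniq {m : ℕ} {q : Fin (m+1)} {π π' σ} (h : Rel q π σ) (h' : Rel q π' σ) : π = π' := by
  apply Equiv.ext
  intro x
  rcases cases_e q x with rfl | rfl | ⟨i, rfl⟩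
  · rw [h.1, h'.1]
  · rw [h.2.1, h'.2.1]
  · rw [h.2.2, h'.2.2]

lemma rel_uniq' {m : ℕ} {q : Fin (m+1)} {π σ σ'} (h : Rel q π σ) (h' : Rel q π σ') : σ = σ' := by
  apply Equiv.ext
  intro x
  rw [← e_inj q, ← h.2.2, ← h'.2.2]

lemma card_step {m p : ℕ} (hp : p < m + 1) :
    ({π : Equiv.Perm (Fin (m+2)) | Good π ∧ (π 0).val = p+1}).ncard = (S m p).ncard := by
  let q : Fin (m+1) := ⟨p, hp⟩
  have h0 : ∀ π : Equiv.Perm (Fin (m+2)), (π 0).val = p+1 → π 0 = q.succ := fun π h => Fin.ext h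
  have key : ∀ π ∈ {π : Equiv.Perm (Fin (m+2)) | Good π ∧ (π 0).val = p+1}, ∃ σ, Rel q π σ :=
    fun π h => exists_small q π h.1.1 (h0 π h.2)
  choose f hf using key
  refine Set.ncard_congr f (fun π h => rel_fwd (hf π h) h.1) ?_ ?_
  · intro π π' h h' heq
    have h1 := hf π h
    rw [heq] at h1
    exact rel_uniq h1 (hf π' h')
  · intro σ hσ
    obtain ⟨π, hi, hr⟩ := exists_big q σ hσ.1.1
    have hm : π ∈ {π : Equiv.Perm (Fin (m+2)) | Good π ∧ (π 0).val = p+1} :=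
      ⟨rel_bwd hr hi hσ, by rw [hr.1]; rfl⟩
    exact ⟨π, hm, rel_uniq' (hf π hm) hr⟩

lemma S_rec {n p : ℕ} (hp : 2 ≤ p) (hpn : p < n + 2) :
    (S (n+3) (p+1)).ncard = (S (n+3) p).ncard + (S (n+1) p).ncard := by
  rw [S_split hp, Set.ncard_union_eq S_disj (Set.toFinite _) (Set.toFinite _),
    card_step (m := n+1) hpn]

lemma S_top (n p : ℕ) (hp : n ≤ p + 1) : S n p = {π | Good π} := by
  ext π
  simp only [S, Set.mem_ofPred_eq, and_iff_left_iff_imp]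
  intro _ x y hx hxy
  rw [Fin.lt_def] at hxy
  omega

def H : ℕ → ℕ → ℕ
  | 0, v => if 2 ≤ v then 1 else 0
  | _+1, 0 => 0
  | s+1, v+1 => H s (v+2) + H s v

lemma H_zero (s : ℕ) : H s 0 = 0 := by cases s <;> simp [H]

lemma S_two_empty : (S 2 2).ncard = 0 := by
  rw [Set.ncard_eq_zero]
  ext π
  simp only [S, Set.mem_ofPred_eq, Set.mem_empty_iff_false, iff_false]
  rintro ⟨⟨_, a, b, c, ⟨h1, h2, _⟩, _⟩, _⟩
  rw [Fin.lt_def] at h1 h2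
  omega

lemma S_eq (s : ℕ) : ∀ u, (S (s+2+u) (s+2)).ncard = H s (u+1) := by
  induction s with
  | zero =>
    intro u
    rcases u with _ | u
    · simpa [H] using S_two_empty
    · have := S_two u
      rw [show 0 + 2 + (u+1) = u + 3 by ring, this]
      simp [H]
  | succ s ih =>
    intro u
    rcases u with _ | u
    · rw [H, H_zero, ← ih 1, S_top _ _ (by omega), S_top _ _ (by omega)]
      rfl
    · rw [H, ← ih u, ← ih (u+2)]
      have := S_rec (n := s + u + 1) (p := s+2) (by omega) (by omega)
      rw [show s + 1 + 2 + (u+1) = s + u + 1 + 3 by ring, show s + 1 + 2 = s + 2 + 1 by ring, this,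
        show s + 2 + (u+2) = s + u + 1 + 3 by ring, show s + 2 + u = s + u + 1 + 1 by ring]

def P : ℕ → ℤ → ℕ
  | 0, x => if x = 0 then 1 else 0
  | s+1, x => P s (x-1) + P s (x+1)

lemma P_neg (s : ℕ) : ∀ x, P s (-x) = P s x := by
  induction s with
  | zero => intro x; simp [P]
  | succ s ih =>
    intro x
    rw [P, P, ← ih (x-1), ← ih (x+1), add_comm]
    congr 2 <;> ring

lemma H_eq (s : ℕ) : ∀ v, H s v = ∑ i ∈ Finset.range v, (P s ((i:ℤ)-1) + P s ((i:ℤ)+2)) := by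
  induction s with
  | zero =>
    intro v
    induction v with
    | zero => simp [H]
    | succ v ihv =>
      rw [Finset.sum_range_succ, ← ihv]
      simp only [H, P]
      split_ifs <;> omega
  | succ s ih =>
    intro v
    induction v with
    | zero => simp [H]
    | succ v ihv =>
      rw [Finset.sum_range_succ, ← ihv, H]
      rcases v with _ | v
      · simp only [H_zero, ih, P]
        simp [Finset.sum_range_succ]
        have := P_neg s 1
        have := P_neg s 2
        norm_num at *
        omega
      · rw [H]
        simp only [ih, P, Finset.sum_range_succ]
        push_cast
        ring_nf

lemma P_big (s : ℕ) : ∀ x : ℤ, (s:ℤ) < x → P s x = 0 := by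
  induction s with
  | zero => intro x hx; simp [P]; push_cast at hx; omega
  | succ s ih =>
    intro x hx
    push_cast at hx
    rw [P, ih _ (by omega), ih _ (by omega)]

lemma P_choose (s : ℕ) : ∀ j : ℕ, P s ((s:ℤ) - 2*j) = s.choose j := by
  induction s with
  | zero => intro j; cases j <;> simp [P]; omega
  | succ s ih =>
    intro j
    rcases j with _ | j
    · rw [P, P_big s (_ + 1) (by push_cast; omega)]
      have := ih 0
      simp at this ⊢
      exact this
    · rw [P, Nat.choose_succ_succ, ← ih, ← ih, add_comm]
      push_cast
      congr 2 <;> ring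

lemma P_odd (s : ℕ) : ∀ x : ℤ, (s + x) % 2 = 1 → P s x = 0 := by
  induction s with
  | zero => intro x hx; simp [P]; rintro rfl; simp at hx
  | succ s ih =>
    intro x hx
    push_cast at hx
    rw [P, ih _ (by omega), ih _ (by omega)]

lemma H_final (s : ℕ) : H s 2 = (s+1).choose (s/2) := by
  rw [H_eq]
  simp only [Finset.sum_range_succ, Finset.sum_range_zero]
  have h1 := P_neg s 1
  obtain ⟨k, rfl | rfl⟩ := Nat.even_or_odd' s
  · have e0 := P_choose (2*k) k
    have e3 := P_neg (2*k) 2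
    have e2 := P_choose (2*k) (k+1)
    have o1 := P_odd (2*k) (-1) (by push_cast; omega)
    have o3 := P_odd (2*k) 3 (by push_cast; omega)
    push_cast at *
    ring_nf at e0 e2
    have : 2*k/2 = k := by omega
    rw [this, ← Nat.choose_symm_of_eq_add (show 2*k+1 = (k+1) + k by ring), Nat.choose_succ_succ]
    norm_num
    rw [show k*2 = 2*k by ring] at e0 e2
    rw [show 1 + k = k+1 by ring] at e2
    rw [o1, o3, e0, ← e3, e2]
    ring
  · have e0 := P_choose (2*k+1) (k+1)
    have e2 := P_choose (2*k+1) (k+2)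
    have n3 := P_neg (2*k+1) 3
    have o1 := P_odd (2*k+1) 0 (by push_cast; omega)
    have o3 := P_odd (2*k+1) 2 (by push_cast; omega)
    push_cast at *
    have : (2*k+1)/2 = k := by omega
    rw [this, ← Nat.choose_symm_of_eq_add (show 2*k+1+1 = (k+2) + k by ring), Nat.choose_succ_succ]
    rw [show (2*(k:ℤ)+1 - 2*(k+1)) = -1 by ring] at e0
    rw [show (2*(k:ℤ)+1 - 2*(k+2)) = -3 by ring] at e2
    norm_num
    rw [o1, o3, e0, ← n3, e2]
    ring

end S14

/-- For every `n ≥ 3`, `i_n(∅;132) = C(n-2, ⌊(n-3)/2⌋)`. -/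
theorem statement14 (n : ℕ) (hn : 3 ≤ n) :
    iCountOnceTotal132 n = (n - 2).choose ((n - 3) / 2) := by
  obtain ⟨s, rfl⟩ := Nat.exists_eq_add_of_le' hn
  have h := S14.S_eq (s+1) 0
  rw [S14.S_top _ _ (by omega), S14.H, S14.H_zero, S14.H_final] at h
  unfold iCountOnceTotal132
  simp only [S14.good_iff]
  exact h
end
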